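/- arXiv:2505.15826 — 4 statements merged into one kernel-verified Lean document; each statement's English description precedes it below -/
import Mathlib

section
/- (Lackner–Panholzer, Theorem 3.2) For all n ≥ 1, the total number M_n of (n,n)-mapping parking functions and the total number F_n of (n,n)-tree parking functions satisfy M_n = n · F_n. -/
/-- A rooted labelled tree on the vertex set `Fin n`, encoded by its root and its parent
map: the root is its own parent and every vertex reaches the root by iterating the parent
map (this data is equivalent to a tree on `{1,…,n}` with a distinguished root). -/
structure LabelledRootedTree (n : ℕ) where
  root : Fin n
  parent : Fin n → Fin n
  parent_root : parent root = root
  reaches_root : ∀ v : Fin n, ∃ k : ℕ, parent^[k] v = root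

/-- The parking procedure driven by a step map `f` on `Fin n` (the parent map of a tree, or
an `n`-mapping).  `occ` is the list of occupied vertices; the drivers in the list arrive in
order, and the driver starting at `v` parks at `f^[i] v` for the least `i` such that
`f^[i] v` is unoccupied (searching `i < n` suffices, since the forward orbit of `v` has at
most `n` distinct vertices, all appearing among the first `n` iterates, in visit order).
The result is `none` if some driver finds every vertex on its route occupied. -/
def parkAux (n : ℕ) (f : Fin n → Fin n) : List (Fin n) → List (Fin n) → Option (List (Fin n))
  | occ, [] => some occ
  | occ, v :: rest =>
    match (List.range n).find? (fun i => decide (f^[i] v ∉ occ)) with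
    | none => none
    | some i => parkAux n f (f^[i] v :: occ) rest

/-- `s : Fin m → Fin n` is a parking function for the step map `f` on `Fin n`:
all `m` drivers, arriving in order with preferences `s 1, …, s m`, park successfully. -/
def ParkingSucceeds {n m : ℕ} (f : Fin n → Fin n) (s : Fin m → Fin n) : Prop :=
  (parkAux n f [] (List.ofFn s)).isSome

/-- `s` is a tree parking function for the rooted labelled tree `T`: each driver `k` starts
at `s k` and drives towards the root, parking at the first unoccupied vertex. -/
def IsTreeParking {n m : ℕ} (T : LabelledRootedTree n) (s : Fin m → Fin n) : Prop :=
  ParkingSucceeds T.parent s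

/-- `M_{n,m}`: the number of pairs `(f, s)` with `f` an `n`-mapping and
`s ∈ {1,…,n}^m` a mapping parking function for `f`. -/
noncomputable def MCount (n m : ℕ) : ℕ :=
  Nat.card {p : (Fin n → Fin n) × (Fin m → Fin n) // ParkingSucceeds p.1 p.2}

/-- `F_{n,m}`: the number of pairs `(T, s)` with `T` a rooted labelled tree on `{1,…,n}`
and `s ∈ {1,…,n}^m` a tree parking function for `T`. -/
noncomputable def FCount (n m : ℕ) : ℕ :=
  Nat.card {p : LabelledRootedTree n × (Fin m → Fin n) // IsTreeParking p.1 p.2}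

namespace LP

structure Forest {n : ℕ} (g r : Fin n → Fin n) : Prop where
  reach : ∀ x, ∃ k, g^[k] x = r x
  step : ∀ x, r (g x) = r x
  fix : ∀ x, g (r x) = r x

def Ext {n : ℕ} (g f : Fin n → Fin n) : Prop := ∀ x, g x ≠ x → f x = g x

def Tree {n : ℕ} (f : Fin n → Fin n) (ρ : Fin n) : Prop := f ρ = ρ ∧ ∀ x, ∃ k, f^[k] x = ρ

lemma iter_fix {n : ℕ} {g : Fin n → Fin n} {x : Fin n} (h : g x = x) (k : ℕ) : g^[k] x = x :=
  Function.iterate_fixed h k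

lemma Forest.root_fix {n : ℕ} {g r : Fin n → Fin n} (h : Forest g r) {x : Fin n} (hx : g x = x) :
    r x = x := by
  obtain ⟨k, hk⟩ := h.reach x
  rw [iter_fix hx] at hk; exact hk.symm

lemma Forest.fix_of {n : ℕ} {g r : Fin n → Fin n} (h : Forest g r) {x : Fin n} (hx : r x = x) :
    g x = x := by
  have := h.fix x
  rwa [hx] at this

lemma ext_reach {n : ℕ} {g r f : Fin n → Fin n} (h : Forest g r) (he : Ext g f) (x : Fin n) :
    ∃ k, f^[k] x = r x := by
  obtain ⟨k, hk⟩ := h.reach x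
  induction k generalizing x with
  | zero => exact ⟨0, hk⟩
  | succ k ih =>
    by_cases hx : g x = x
    · exact ⟨0, by simp [h.root_fix hx]⟩
    · obtain ⟨k', hk'⟩ := ih (g x) (by rw [h.step]; simpa using hk)
      exact ⟨k' + 1, by rw [Function.iterate_succ_apply, he x hx, hk', h.step]⟩

lemma ext_update {n : ℕ} {g f : Fin n → Fin n} {v w : Fin n} (hv : g v = v) (hw : w ≠ v) :
    Ext (Function.update g v w) f ↔ Ext g f ∧ f v = w := by
  constructor
  · intro h
    constructor
    · intro x hx
      have hxv : x ≠ v := by rintro rfl; exact hx hv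
      have := h x (by simpa [Function.update_of_ne hxv] using hx)
      simpa [Function.update_of_ne hxv] using this
    · have := h v (by simpa using hw)
      simpa using this
  · rintro ⟨h, h2⟩ x hx
    by_cases hxv : x = v
    · subst hxv; simpa using h2
    · rw [Function.update_of_ne hxv] at hx ⊢
      exact h x hx

lemma forest_update {n : ℕ} {g r : Fin n → Fin n} (h : Forest g r) {v w : Fin n}
    (hv : g v = v) (hw : r w ≠ v) :
    Forest (Function.update g v w) (fun x => if r x = v then r w else r x) := by
  have hrv := h.root_fix hv
  have hE : Ext g (Function.update g v w) := by
    intro x hx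
    have hxv : x ≠ v := by rintro rfl; exact hx hv
    rw [Function.update_of_ne hxv]
  refine ⟨?_, ?_, ?_⟩
  · intro x
    obtain ⟨k, hk⟩ := ext_reach h hE x
    by_cases hx : r x = v
    · obtain ⟨j, hj⟩ := ext_reach h hE w
      refine ⟨(j + 1) + k, ?_⟩
      rw [Function.iterate_add_apply, hk, hx, Function.iterate_succ_apply]
      simp [hj, hx]
    · exact ⟨k, by simp [hk, hx]⟩
  · intro x
    by_cases hxv : x = v
    · subst hxv; simp [hw, hrv]
    · simp [Function.update_of_ne hxv, h.step]
  · intro x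
    by_cases hx : r x = v
    · simp [hx, Function.update_of_ne hw, h.fix]
    · simp [hx, Function.update_of_ne hx, h.fix]

open Classical in
lemma count_root {n : ℕ} (m : ℕ) : ∀ (g r : Fin n → Fin n) (ρ : Fin n), Forest g r → g ρ = ρ →
    (Finset.univ.filter (fun x => g x = x)).card = m →
    n ^ 2 * (Finset.univ.filter (fun f : Fin n → Fin n => Ext g f ∧ Tree f ρ)).card
      = (Finset.univ.filter (fun x => r x = ρ)).card * n ^ m := by
  induction m with
  | zero =>
    intro g r ρ h hρ hc
    rw [Finset.card_eq_zero, Finset.filter_eq_empty_iff] at hc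
    exact absurd hρ (hc (Finset.mem_univ ρ))
  | succ m ih =>
    intro g r ρ h hρ hc
    by_cases hex : ∃ v, g v = v ∧ v ≠ ρ
    · obtain ⟨v, hv, hvρ⟩ := hex
      have key : ∀ w, n ^ 2 * (Finset.univ.filter
          (fun f : Fin n → Fin n => (Ext g f ∧ Tree f ρ) ∧ f v = w)).card
          = if r w = v then 0 else
            ((Finset.univ.filter (fun x => r x = ρ)).card +
              if r w = ρ then (Finset.univ.filter (fun x => r x = v)).card else 0) * n ^ m := by
        intro w
        split_ifs with h1 h2
        · rw [Finset.filter_eq_empty_iff.2]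
          · simp
          rintro f - ⟨⟨he, ht⟩, hf⟩
          obtain ⟨k, hk⟩ := ext_reach h he w
          have hcyc : f^[k + 1] v = v := by
            rw [Function.iterate_succ_apply, hf, hk, h1]
          obtain ⟨j, hj⟩ := ht.2 v
          have e1 : f^[(k + 1) * j] v = v := by
            rw [Function.iterate_mul]; exact iter_fix hcyc j
          have e2 : f^[(k + 1) * j] v = ρ := by
            rw [add_mul, one_mul, Function.iterate_add_apply, hj]; exact iter_fix ht.1 _
          exact hvρ (e1.symm.trans e2)
        all_goals
          have hwv : w ≠ v := by
            rintro rfl; exact h1 (h.root_fix hv)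
          have hF := forest_update h hv h1
          have := ih _ _ ρ hF (by rw [Function.update_of_ne hvρ.symm, hρ]) (by
            have : (Finset.univ.filter (fun x => Function.update g v w x = x))
                = (Finset.univ.filter (fun x => g x = x)).erase v := by
              ext x
              by_cases hx : x = v
              · subst hx; simp [hwv]
              · simp [hx]
            rw [this, Finset.card_erase_of_mem (by simp [hv]), hc]; rfl)
          have e : (Finset.univ.filter
              (fun f : Fin n → Fin n => (Ext g f ∧ Tree f ρ) ∧ f v = w)) =
              (Finset.univ.filter
              (fun f : Fin n → Fin n => Ext (Function.update g v w) f ∧ Tree f ρ)) := by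
            ext f
            simp only [Finset.mem_filter, Finset.mem_univ, true_and, ext_update hv hwv]
            tauto
          rw [e, this]
          congr 1
        · rw [← Finset.card_union_of_disjoint]
          · congr 1
            ext x
            simp only [Finset.mem_filter, Finset.mem_univ, true_and, Finset.mem_union]
            by_cases hx : r x = v <;> simp [hx, h2]
          · rw [Finset.disjoint_filter]
            intro x _ hx hx2
            exact hvρ (hx2.symm.trans hx)
        · rw [add_zero]
          congr 1
          ext x
          simp only [Finset.mem_filter, Finset.mem_univ, true_and]
          by_cases hx : r x = v <;> simp [hx, h2, hvρ]
      have hs := Finset.card_eq_sum_card_fiberwise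
        (s := Finset.univ.filter (fun f : Fin n → Fin n => Ext g f ∧ Tree f ρ))
        (t := Finset.univ) (f := fun f => f v) (by intro x _; simp)
      rw [hs, Finset.mul_sum]
      simp only [Finset.filter_filter]
      rw [Finset.sum_congr rfl (fun w _ => key w)]
      set a := (Finset.univ.filter (fun x => r x = ρ)).card with ha
      set b := (Finset.univ.filter (fun x => r x = v)).card with hb
      have hsplit : ∀ w, (if r w = v then 0 else (a + if r w = ρ then b else 0) * n ^ m)
          + (if r w = v then a * n ^ m else 0)
          = a * n ^ m + if r w = ρ then b * n ^ m else 0 := by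
        intro w
        by_cases h1 : r w = v
        · simp [h1, hvρ]
        · by_cases h2 : r w = ρ <;> simp [h1, h2, hvρ.symm] ; ring
      have hsum := Finset.sum_congr (rfl : (Finset.univ : Finset (Fin n)) = Finset.univ)
        (fun w _ => hsplit w)
      rw [Finset.sum_add_distrib, Finset.sum_add_distrib, ← Finset.sum_filter,
        ← Finset.sum_filter] at hsum
      simp only [Finset.sum_const, smul_eq_mul, ← ha, ← hb, Finset.card_univ,
        Fintype.card_fin] at hsum
      have : a * n ^ (m + 1) = n * (a * n ^ m) := by ring
      rw [this]
      have e2 : a * (b * n ^ m) = b * (a * n ^ m) := by ring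
      omega
    · push Not at hex
      have h1 : (Finset.univ.filter (fun x => g x = x)) = {ρ} := by
        ext x
        simp only [Finset.mem_filter, Finset.mem_univ, true_and, Finset.mem_singleton]
        exact ⟨hex x, by rintro rfl; exact hρ⟩
      rw [h1, Finset.card_singleton] at hc
      have hr : ∀ x, r x = ρ := fun x => hex _ (h.fix x)
      have h2 : (Finset.univ.filter (fun f : Fin n → Fin n => Ext g f ∧ Tree f ρ)) = {g} := by
        ext f
        simp only [Finset.mem_filter, Finset.mem_univ, true_and, Finset.mem_singleton]
        constructor
        · rintro ⟨he, ht⟩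
          funext x
          by_cases hx : g x = x
          · have := hex x hx
            subst this
            rw [ht.1, hx]
          · exact he x hx
        · rintro rfl
          exact ⟨fun _ _ => rfl, hρ, fun x => by rw [← hr x]; exact h.reach x⟩
      rw [h2, ← hc]
      simp [hr, pow_two]

lemma tree_unique {n : ℕ} {f : Fin n → Fin n} {a b : Fin n} (ha : Tree f a) (hb : Tree f b) :
    a = b := by
  obtain ⟨k, hk⟩ := hb.2 a
  rw [iter_fix ha.1] at hk; exact hk

open Classical in
lemma count_tree {n : ℕ} (hn : 1 ≤ n) (g r : Fin n → Fin n) (h : Forest g r) :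
    (Finset.univ.filter (fun f : Fin n → Fin n => Ext g f)).card =
    n * (Finset.univ.filter (fun f : Fin n → Fin n => Ext g f ∧ ∃ ρ, Tree f ρ)).card := by
  set m := (Finset.univ.filter (fun x => g x = x)).card with hm
  have h1 : (Finset.univ.filter (fun f : Fin n → Fin n => Ext g f)).card = n ^ m := by
    have : (Finset.univ.filter (fun f : Fin n → Fin n => Ext g f)) =
        Fintype.piFinset (fun x => if g x = x then Finset.univ else {g x}) := by
      ext f
      rw [Finset.mem_filter, Fintype.mem_piFinset]
      simp only [Finset.mem_univ, true_and]
      unfold Ext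
      refine forall_congr' fun x => ?_
      by_cases hx : g x = x <;> simp [hx]
    rw [this, Fintype.card_piFinset]
    simp only [apply_ite Finset.card, Finset.card_univ, Fintype.card_fin, Finset.card_singleton]
    rw [← Finset.prod_filter, Finset.prod_const, hm]
  have h2 : (Finset.univ.filter (fun f : Fin n → Fin n => Ext g f ∧ ∃ ρ, Tree f ρ)) =
      (Finset.univ.filter (fun x => g x = x)).biUnion
        (fun ρ => Finset.univ.filter (fun f : Fin n → Fin n => Ext g f ∧ Tree f ρ)) := by
    ext f
    simp only [Finset.mem_filter, Finset.mem_univ, true_and, Finset.mem_biUnion]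
    constructor
    · rintro ⟨he, ρ, ht⟩
      refine ⟨ρ, ?_, he, ht⟩
      by_contra hx
      exact hx (he ρ hx ▸ ht.1)
    · rintro ⟨ρ, _, he, ht⟩
      exact ⟨he, ρ, ht⟩
  have h3 : n ^ 2 * (Finset.univ.filter
      (fun f : Fin n → Fin n => Ext g f ∧ ∃ ρ, Tree f ρ)).card = n * n ^ m := by
    rw [h2, Finset.card_biUnion, Finset.mul_sum]
    · rw [Finset.sum_congr rfl (fun ρ hρ => count_root m g r ρ h (by simpa using hρ) hm.symm),
        ← Finset.sum_mul]
      congr 1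
      have := Finset.card_eq_sum_card_fiberwise
        (s := (Finset.univ : Finset (Fin n)))
        (t := Finset.univ.filter (fun x => g x = x)) (f := r) (by intro x _; simp [h.fix])
      rw [← this]; simp
    · intro a _ b _ hab
      rw [Function.onFun, Finset.disjoint_filter]
      rintro f _ ⟨_, ha⟩ ⟨_, hb⟩
      exact hab (tree_unique ha hb)
  rw [h1]
  have : n * n ^ m = n * (n * (Finset.univ.filter
      (fun f : Fin n → Fin n => Ext g f ∧ ∃ ρ, Tree f ρ)).card) := by
    rw [← h3]; ring
  exact Nat.eq_of_mul_eq_mul_left hn this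

lemma exists_forest {n : ℕ} (g : Fin n → Fin n) (h : ∀ x, ∃ k, g (g^[k] x) = g^[k] x) :
    ∃ r, Forest g r := by
  choose k hk using h
  have uniq : ∀ x i j, g (g^[i] x) = g^[i] x → g (g^[j] x) = g^[j] x → g^[i] x = g^[j] x := by
    intro x i j hi hj
    have a := iter_fix hi j
    have b := iter_fix hj i
    rw [← Function.iterate_add_apply] at a b
    rw [← a, ← b, add_comm]
  refine ⟨fun x => g^[k x] x, fun x => ⟨k x, rfl⟩, fun x => ?_, hk⟩
  have := hk (g x)
  simp only [← Function.iterate_succ_apply] at this ⊢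
  exact uniq x _ _ this (hk x)

/-- vertices that some driver leaves -/
def used (n : ℕ) (f : Fin n → Fin n) : List (Fin n) → List (Fin n) → Set (Fin n)
  | _, [] => ∅
  | occ, v :: rest =>
    match (List.range n).find? (fun i => decide (f^[i] v ∉ occ)) with
    | none => ∅
    | some i => {x | ∃ j < i, f^[j] v = x} ∪ used n f (f^[i] v :: occ) rest

lemma find_spec {n : ℕ} {f : Fin n → Fin n} {occ : List (Fin n)} {v : Fin n} {i : ℕ} :
    (List.range n).find? (fun i => decide (f^[i] v ∉ occ)) = some i ↔
      f^[i] v ∉ occ ∧ i < n ∧ ∀ j < i, f^[j] v ∈ occ := by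
  rw [List.find?_range_eq_some]
  simp

lemma park_congr {n : ℕ} {f f' : Fin n → Fin n} : ∀ (l occ : List (Fin n)),
    (parkAux n f occ l).isSome → (∀ x ∈ used n f occ l, f' x = f x) →
    (parkAux n f' occ l).isSome ∧ used n f' occ l = used n f occ l := by
  intro l
  induction l with
  | nil => intro occ _ _; simp [parkAux, used]
  | cons v rest ih =>
    intro occ hp hu
    rcases hfi : (List.range n).find? (fun i => decide (f^[i] v ∉ occ)) with _ | i
    · simp only [parkAux, hfi] at hp
      simp at hp
    · simp only [parkAux, hfi] at hp
      simp only [used, hfi] at hu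
      have hit : ∀ j ≤ i, f'^[j] v = f^[j] v := by
        intro j
        induction j with
        | zero => simp
        | succ j ihj =>
          intro hj
          rw [Function.iterate_succ_apply', Function.iterate_succ_apply', ihj (by omega)]
          exact hu _ (Or.inl ⟨j, by omega, rfl⟩)
      have hfi' : (List.range n).find? (fun i => decide (f'^[i] v ∉ occ)) = some i := by
        rw [find_spec] at hfi ⊢
        refine ⟨by rw [hit i le_rfl]; exact hfi.1, hfi.2.1, fun j hj => ?_⟩
        rw [hit j hj.le]; exact hfi.2.2 j hj
      have := ih _ hp (fun x hx => hu x (Or.inr hx))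
      simp only [parkAux, used, hfi, hfi', hit i le_rfl]
      refine ⟨this.1, ?_⟩
      rw [this.2]
      congr 1
      ext x
      constructor
      · rintro ⟨j, hj, e⟩; exact ⟨j, hj, by rw [← hit j hj.le]; exact e⟩
      · rintro ⟨j, hj, e⟩; exact ⟨j, hj, by rw [hit j hj.le]; exact e⟩

lemma used_ne {n : ℕ} {f : Fin n → Fin n} : ∀ (l occ : List (Fin n)),
    ∀ x ∈ used n f occ l, f x ≠ x := by
  intro l
  induction l with
  | nil => intro occ x hx; simp [used] at hx
  | cons v rest ih =>
    intro occ x hx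
    rcases hfi : (List.range n).find? (fun i => decide (f^[i] v ∉ occ)) with _ | i
    · simp only [used, hfi] at hx
      exact absurd hx (Set.notMem_empty x)
    · simp only [used, hfi] at hx
      rcases hx with ⟨j, hj, rfl⟩ | hx
      · intro hfx
        rw [find_spec] at hfi
        apply hfi.1
        have : f^[i] v = f^[j] v := by
          conv_lhs => rw [show i = (i - j) + j by omega, Function.iterate_add_apply]
          exact iter_fix hfx _
        rw [this]; exact hfi.2.2 j hj
      · exact ih _ x hx

lemma used_exit {n : ℕ} {f : Fin n → Fin n} : ∀ (l occ : List (Fin n)) (U : Set (Fin n)),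
    (∀ x ∈ U, x ∈ occ) → (∀ x, ∃ k, f^[k] x ∉ U) → ∀ x, ∃ k, f^[k] x ∉ U ∪ used n f occ l := by
  intro l
  induction l with
  | nil => intro occ U _ h; simpa [used] using h
  | cons v rest ih =>
    intro occ U hU h
    rcases hfi : (List.range n).find? (fun i => decide (f^[i] v ∉ occ)) with _ | i
    · simp only [used, hfi, Set.union_empty]
      exact h
    · simp only [used, hfi]
      rw [find_spec] at hfi
      rw [← Set.union_assoc]
      have hsub : ∀ x ∈ U ∪ {x | ∃ j < i, f^[j] v = x}, x ∈ occ := by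
        rintro x (hx | ⟨j, hj, rfl⟩)
        · exact hU x hx
        · exact hfi.2.2 j hj
      apply ih
      · intro x hx; exact List.mem_cons_of_mem _ (hsub x hx)
      · intro x
        obtain ⟨k, hk⟩ := h x
        by_cases hx : f^[k] x ∈ U ∪ {x | ∃ j < i, f^[j] v = x}
        · rcases hx with hx | ⟨j, hj, e⟩
          · exact absurd hx hk
          · refine ⟨(i - j) + k, ?_⟩
            rw [Function.iterate_add_apply, ← e, ← Function.iterate_add_apply,
              show i - j + j = i by omega]
            intro hc
            exact hfi.1 (hsub _ hc)
        · exact ⟨k, hx⟩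

open Classical in
noncomputable def red {n : ℕ} (l : List (Fin n)) (f : Fin n → Fin n) : Fin n → Fin n :=
  fun x => if x ∈ used n f [] l then f x else x

lemma red_ne {n : ℕ} (l : List (Fin n)) (f : Fin n → Fin n) (x : Fin n) :
    red l f x ≠ x ↔ x ∈ used n f [] l := by
  unfold red
  split_ifs with h
  · simp [h, used_ne _ _ _ h]
  · simp [h]

lemma red_forest {n : ℕ} (l : List (Fin n)) (f : Fin n → Fin n) : ∃ r, Forest (red l f) r := by
  apply exists_forest
  intro x
  obtain ⟨k, hk⟩ := used_exit (f := f) l [] ∅ (by simp) (fun x => ⟨0, by simp⟩) x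
  rw [Set.empty_union] at hk
  induction k generalizing x with
  | zero => exact ⟨0, by by_contra hc; exact hk ((red_ne l f x).1 hc)⟩
  | succ k ih =>
    by_cases hx : x ∈ used n f [] l
    · obtain ⟨j, hj⟩ := ih (f x) hk
      refine ⟨j + 1, ?_⟩
      rw [Function.iterate_succ_apply]
      have : red l f x = f x := by simp [red, hx]
      rw [this]; exact hj
    · exact ⟨0, by by_contra hc; exact hx ((red_ne l f x).1 hc)⟩

lemma fiber {n : ℕ} (l : List (Fin n)) (f₀ f : Fin n → Fin n)
    (hp : (parkAux n f₀ [] l).isSome) :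
    ((parkAux n f [] l).isSome ∧ red l f = red l f₀) ↔ Ext (red l f₀) f := by
  constructor
  · rintro ⟨-, h⟩ x hx
    rw [← h] at hx ⊢
    rw [red_ne] at hx
    simp [red, hx]
  · intro h
    have hag : ∀ x ∈ used n f₀ [] l, f x = f₀ x := by
      intro x hx
      rw [h x ((red_ne l f₀ x).2 hx)]
      simp [red, hx]
    obtain ⟨h1, h2⟩ := park_congr l [] hp hag
    refine ⟨h1, ?_⟩
    funext x
    unfold red
    rw [h2]
    split_ifs with hx
    · exact hag x hx
    · rfl

open Classical in
lemma count_list {n : ℕ} (hn : 1 ≤ n) (l : List (Fin n)) :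
    (Finset.univ.filter (fun f : Fin n → Fin n => (parkAux n f [] l).isSome)).card =
    n * (Finset.univ.filter (fun f : Fin n → Fin n =>
      (parkAux n f [] l).isSome ∧ ∃ ρ, Tree f ρ)).card := by
  set S := Finset.univ.filter (fun f : Fin n → Fin n => (parkAux n f [] l).isSome) with hS
  rw [Finset.card_eq_sum_card_fiberwise (s := S) (t := S.image (red l)) (f := red l)
      (by intro x hx; exact Finset.mem_coe.2 (Finset.mem_image_of_mem _ hx)),
    Finset.card_eq_sum_card_fiberwise (t := S.image (red l)) (f := red l)
      (by
        intro x hx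
        apply Finset.mem_coe.2
        apply Finset.mem_image_of_mem
        simp only [Finset.coe_filter, Finset.mem_univ, true_and, Set.mem_ofPred_eq] at hx
        simp [hS, hx.1]), Finset.mul_sum]
  apply Finset.sum_congr rfl
  intro g hg
  obtain ⟨f₀, hf₀, rfl⟩ := Finset.mem_image.1 hg
  have hp : (parkAux n f₀ [] l).isSome := by simpa [hS] using hf₀
  obtain ⟨r, hr⟩ := red_forest l f₀
  convert count_tree hn _ r hr using 2
  · ext f
    simp only [hS, Finset.mem_filter, Finset.mem_univ, true_and]
    exact fiber l f₀ f hp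
  · congr 1
    ext f
    simp only [Finset.mem_filter, Finset.mem_univ, true_and, ← fiber l f₀ f hp]
    tauto

noncomputable def treeEquiv (n : ℕ) :
    LabelledRootedTree n ≃ {f : Fin n → Fin n // ∃ ρ, Tree f ρ} where
  toFun T := ⟨T.parent, T.root, T.parent_root, T.reaches_root⟩
  invFun f := ⟨f.2.choose, f.1, f.2.choose_spec.1, f.2.choose_spec.2⟩
  left_inv T := by
    have h : ∃ ρ, Tree T.parent ρ := ⟨T.root, T.parent_root, T.reaches_root⟩
    have e : h.choose = T.root := tree_unique h.choose_spec ⟨T.parent_root, T.reaches_root⟩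
    cases T
    simp only [LabelledRootedTree.mk.injEq, and_true]
    exact e
  right_inv f := rfl

end LP

/-- (Lackner–Panholzer, Theorem 3.2) For all `n ≥ 1`, `M_n = n · F_n`, where
`M_n = M_{n,n}` and `F_n = F_{n,n}`. -/
theorem lackner_panholzer_theorem_3_2 (n : ℕ) (hn : 1 ≤ n) :
    MCount n n = n * FCount n n := by
  classical
  have hM : MCount n n = ∑ s : Fin n → Fin n, (Finset.univ.filter
      (fun f : Fin n → Fin n => (parkAux n f [] (List.ofFn s)).isSome)).card := by
    unfold MCount
    rw [Nat.card_congr (Equiv.subtypeEquiv (Equiv.prodComm _ _)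
      (q := fun p => ParkingSucceeds p.2 p.1) (by intro p; rfl)),
      Nat.card_congr (Equiv.subtypeProdEquivSigmaSubtype
        (fun (s f : Fin n → Fin n) => ParkingSucceeds f s)), Nat.card_sigma]
    refine Finset.sum_congr rfl fun s _ => ?_
    rw [Nat.card_eq_fintype_card, Fintype.card_subtype]
    congr 1
    ext f
    rw [Finset.mem_filter, Finset.mem_filter]
    exact Iff.rfl
  have hF : FCount n n = ∑ s : Fin n → Fin n, (Finset.univ.filter
      (fun f : Fin n → Fin n => (parkAux n f [] (List.ofFn s)).isSome ∧
        ∃ ρ, LP.Tree f ρ)).card := by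
    unfold FCount
    rw [Nat.card_congr (Equiv.subtypeEquiv
      ((Equiv.prodComm _ _).trans (Equiv.prodCongr (Equiv.refl _) (LP.treeEquiv n)))
      (q := fun p => ParkingSucceeds p.2.1 p.1) (by intro p; rfl)),
      Nat.card_congr (Equiv.subtypeProdEquivSigmaSubtype
        (fun (s : Fin n → Fin n) (f : {f : Fin n → Fin n // ∃ ρ, LP.Tree f ρ}) =>
          ParkingSucceeds f.1 s)), Nat.card_sigma]
    refine Finset.sum_congr rfl fun s _ => ?_
    rw [Nat.card_congr (Equiv.subtypeSubtypeEquivSubtypeInter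
      (fun f : Fin n → Fin n => ∃ ρ, LP.Tree f ρ) (fun f => ParkingSucceeds f s)),
      Nat.card_eq_fintype_card, Fintype.card_subtype]
    congr 1
    ext f
    rw [Finset.mem_filter, Finset.mem_filter]
    unfold ParkingSucceeds
    tauto
  rw [hM, hF, Finset.mul_sum]
  exact Finset.sum_congr rfl fun s _ => LP.count_list hn _
end

section
/- (Lackner–Panholzer, Theorem 3.3) For every n ≥ 1, the total number M_n of (n,n)-mapping parking functions is M_n = n!·(n−1)!·Σ_{j=0}^{n−1} (n−j)·(2n)^j / j!. -/
def LPV {ι : Type*} [DecidableEq ι] : ℕ → ℚ → Finset ι → (ι → ℚ) → ℚ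
  | 0, _, _, _ => 1
  | m+1, c, A, b => ∑ i ∈ A, (b i * (c + b i) * LPV m (c + b i) (A.erase i) b
      + ∑ j ∈ A.erase i, b i * b j * LPV m c (A.erase i) (Function.update b j (b j + b i)))

def LPW {ι : Type*} [DecidableEq ι] (S : Finset ι) (b : ι → ℚ) : ℚ :=
  if S = ∅ then 0 else
    (Nat.factorial (S.card - 1) : ℚ) * (2 * ∑ i ∈ S, b i) ^ (S.card - 1) * ∏ i ∈ S, b i

theorem LPV_congr {ι : Type*} [DecidableEq ι] (m : ℕ) : ∀ (c : ℚ) (A : Finset ι) (b b' : ι → ℚ),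
    (∀ i ∈ A, b i = b' i) → LPV m c A b = LPV m c A b' := by
  induction m with
  | zero => intros; rfl
  | succ m ih =>
    intro c A b b' h
    simp only [LPV]
    refine Finset.sum_congr rfl fun i hi => ?_
    rw [h i hi, ih _ _ b b' (fun k hk => h k (Finset.mem_of_mem_erase hk))]
    congr 1
    refine Finset.sum_congr rfl fun j hj => ?_
    rw [h j (Finset.mem_of_mem_erase hj)]
    congr 1
    apply ih
    intro k hk
    by_cases hkj : k = j
    · subst hkj; simp
    · simp [hkj, h k (Finset.mem_of_mem_erase hk)]

theorem LPW_congr {ι : Type*} [DecidableEq ι] (S : Finset ι) (b b' : ι → ℚ)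
    (h : ∀ i ∈ S, b i = b' i) : LPW S b = LPW S b' := by
  unfold LPW
  rw [Finset.sum_congr rfl h, Finset.prod_congr rfl h]

theorem LP_sum_update {ι : Type*} [DecidableEq ι] (S : Finset ι) (b : ι → ℚ) (i j : ι)
    (hi : i ∈ S) (hj : j ∈ S.erase i) :
    ∑ k ∈ S.erase i, Function.update b j (b j + b i) k = ∑ k ∈ S, b k := by
  rw [Finset.sum_update_of_mem hj, ← Finset.add_sum_erase S b hi,
    ← Finset.add_sum_erase (S.erase i) b hj, Finset.sdiff_singleton_eq_erase]
  ring

theorem LP_prod_update {ι : Type*} [DecidableEq ι] (S : Finset ι) (b : ι → ℚ) (i j : ι)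
    (hi : i ∈ S) (hj : j ∈ S.erase i) :
    b i * b j * ∏ k ∈ S.erase i, Function.update b j (b j + b i) k
      = (b i + b j) * ∏ k ∈ S, b k := by
  rw [Finset.prod_update_of_mem hj, ← Finset.mul_prod_erase S b hi,
    ← Finset.mul_prod_erase (S.erase i) b hj, Finset.sdiff_singleton_eq_erase]
  ring

theorem LPW_rec {ι : Type*} [DecidableEq ι] (S : Finset ι) (b : ι → ℚ) (hS : 2 ≤ S.card) :
    ∑ i ∈ S, ∑ j ∈ S.erase i, b i * b j * LPW (S.erase i) (Function.update b j (b j + b i))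
      = LPW S b := by
  obtain ⟨s, hs⟩ : ∃ s, S.card = s + 2 := ⟨S.card - 2, by omega⟩
  have key : ∀ i ∈ S, ∀ j ∈ S.erase i,
      b i * b j * LPW (S.erase i) (Function.update b j (b j + b i))
      = (b i + b j) * ((Nat.factorial s : ℚ) * (2 * ∑ i ∈ S, b i) ^ s * ∏ i ∈ S, b i) := by
    intro i hi j hj
    have hne : S.erase i ≠ ∅ := Finset.ne_empty_of_mem hj
    have hc : (S.erase i).card - 1 = s := by rw [Finset.card_erase_of_mem hi]; omega
    rw [LPW, if_neg hne, hc, LP_sum_update S b i j hi hj]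
    linear_combination ((Nat.factorial s : ℚ) * (2 * ∑ i ∈ S, b i) ^ s) * LP_prod_update S b i j hi hj
  rw [Finset.sum_congr rfl fun i hi => Finset.sum_congr rfl (key i hi)]
  simp only [← Finset.sum_mul]
  have h2 : ∑ i ∈ S, ∑ j ∈ S.erase i, (b i + b j) = 2 * (s + 1) * ∑ i ∈ S, b i := by
    have : ∀ i ∈ S, ∑ j ∈ S.erase i, (b i + b j) = s * b i + ∑ j ∈ S, b j := by
      intro i hi
      rw [Finset.sum_add_distrib, Finset.sum_const, Finset.card_erase_of_mem hi, hs,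
        ← Finset.add_sum_erase S b hi, nsmul_eq_mul]
      have : s + 2 - 1 = s + 1 := by omega
      rw [this]; push_cast; ring
    rw [Finset.sum_congr rfl this, Finset.sum_add_distrib, ← Finset.mul_sum, Finset.sum_const, hs,
      nsmul_eq_mul]
    push_cast; ring
  have hne : S ≠ ∅ := by rintro rfl; simp at hs
  rw [h2, LPW, if_neg hne, hs]
  have : s + 2 - 1 = s + 1 := by omega
  rw [this, Nat.factorial_succ]; push_cast; ring

theorem LP_swap1 {ι : Type*} [DecidableEq ι] (A : Finset ι) (F : ι → Finset ι → ℚ) :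
    ∑ i ∈ A, ∑ S ∈ (A.erase i).powerset, F i S = ∑ S ∈ A.powerset, ∑ i ∈ A \ S, F i S := by
  apply Finset.sum_comm'
  intro i S
  simp only [Finset.mem_powerset, Finset.mem_sdiff, Finset.subset_erase]
  tauto

theorem LP_swap2 {ι : Type*} [DecidableEq ι] (A : Finset ι) (F : ι → Finset ι → ℚ) :
    ∑ i ∈ A, ∑ S ∈ (A.erase i).powerset, F i S
      = ∑ S ∈ A.powerset, ∑ i ∈ S, F i (S.erase i) := by
  rw [Finset.sum_sigma', Finset.sum_sigma']
  refine Finset.sum_bij' (fun x _ => ⟨insert x.1 x.2, x.1⟩) (fun x _ => ⟨x.2, x.1.erase x.2⟩)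
    ?_ ?_ ?_ ?_ ?_
  · rintro ⟨i, S⟩ h
    simp only [Finset.mem_sigma, Finset.mem_powerset, Finset.subset_erase] at h ⊢
    exact ⟨Finset.insert_subset h.1 h.2.1, Finset.mem_insert_self _ _⟩
  · rintro ⟨S, i⟩ h
    simp only [Finset.mem_sigma, Finset.mem_powerset] at h ⊢
    exact ⟨h.1 h.2, Finset.erase_subset_erase _ h.1⟩
  · rintro ⟨i, S⟩ h
    simp only [Finset.mem_sigma, Finset.mem_powerset, Finset.subset_erase] at h
    simp [Finset.erase_insert h.2.2]
  · rintro ⟨S, i⟩ h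
    simp only [Finset.mem_sigma, Finset.mem_powerset] at h
    simp [Finset.insert_erase h.2]
  · rintro ⟨i, S⟩ h
    simp only [Finset.mem_sigma, Finset.mem_powerset, Finset.subset_erase] at h
    simp [Finset.erase_insert h.2.2]

theorem LPV_renewal {ι : Type*} [DecidableEq ι] (m : ℕ) : ∀ (c : ℚ) (A : Finset ι) (b : ι → ℚ),
    A.card = m + 1 → LPV (m+1) c A b = (c + ∑ i ∈ A, b i) * ∑ S ∈ A.powerset,
      (Nat.choose m (S.card - 1) : ℚ) * LPW S b * LPV (m + 1 - S.card) c (A \ S) b := by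
  induction m with
  | zero =>
    intro c A b hA
    obtain ⟨a, rfl⟩ := Finset.card_eq_one.1 (by simpa using hA)
    have : ({a} : Finset ι).powerset = {∅, {a}} := by
      ext x; simp [Finset.subset_singleton_iff]
    rw [this, Finset.sum_pair (by simp)]
    simp [LPV, LPW]; ring
  | succ m ih =>
    intro c A b hA
    rw [LPV]
    have e1 : ∀ i ∈ A, (b i * (c + b i) * LPV (m+1) (c + b i) (A.erase i) b
      + ∑ j ∈ A.erase i, b i * b j * LPV (m+1) c (A.erase i) (Function.update b j (b j + b i)))
      = (c + ∑ i ∈ A, b i) * (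
        ∑ S ∈ (A.erase i).powerset, (Nat.choose m (S.card - 1) : ℚ) * LPW S b *
          (b i * (c + b i) * LPV (m + 1 - S.card) (c + b i) ((A \ S).erase i) b
           + ∑ j ∈ (A \ S).erase i, b i * b j * LPV (m + 1 - S.card) c ((A \ S).erase i) (Function.update b j (b j + b i)))
        + ∑ S ∈ (A.erase i).powerset, ∑ j ∈ S, b i * b j * ((Nat.choose m (S.card - 1) : ℚ) *
            LPW S (Function.update b j (b j + b i)) * LPV (m + 1 - S.card) c ((A.erase i) \ S) b)) := by
      intro i hi
      have hc : (A.erase i).card = m + 1 := by rw [Finset.card_erase_of_mem hi]; omega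
      have hsd : ∀ S : Finset ι, (A \ S).erase i = (A.erase i) \ S := fun S => by
        rw [Finset.erase_sdiff_comm]
      rw [ih (c + b i) (A.erase i) b hc]
      have e2 : ∀ j ∈ A.erase i, b i * b j * LPV (m+1) c (A.erase i) (Function.update b j (b j + b i))
          = ∑ S ∈ (A.erase i).powerset, (c + ∑ i ∈ A, b i) * (b i * b j * ((Nat.choose m (S.card - 1) : ℚ) * LPW S (Function.update b j (b j + b i)) * LPV (m + 1 - S.card) c ((A.erase i) \ S) (Function.update b j (b j + b i)))) := by
        intro j hj
        rw [ih c (A.erase i) _ hc, LP_sum_update A b i j hi hj, Finset.mul_sum, Finset.mul_sum]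
        refine Finset.sum_congr rfl fun S _ => by ring
      rw [Finset.sum_congr rfl e2, Finset.sum_comm, add_assoc, Finset.add_sum_erase A b hi,
        Finset.mul_sum, Finset.mul_sum, ← Finset.sum_add_distrib, ← Finset.sum_add_distrib,
        Finset.mul_sum]
      refine Finset.sum_congr rfl fun S hS => ?_
      rw [Finset.mem_powerset] at hS
      rw [hsd, ← Finset.sum_sdiff hS, ← Finset.mul_sum, ← Finset.mul_sum]
      have e3 : ∀ j ∈ A.erase i \ S, b i * b j * ((Nat.choose m (S.card - 1) : ℚ) * LPW S (Function.update b j (b j + b i)) * LPV (m + 1 - S.card) c ((A.erase i) \ S) (Function.update b j (b j + b i)))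
          = (Nat.choose m (S.card - 1) : ℚ) * LPW S b * (b i * b j * LPV (m + 1 - S.card) c ((A.erase i) \ S) (Function.update b j (b j + b i))) := by
        intro j hj
        rw [LPW_congr S (Function.update b j (b j + b i)) b]
        · ring
        · intro k hk
          have : k ≠ j := by rintro rfl; exact (Finset.mem_sdiff.1 hj).2 hk
          simp [this]
      have e4 : ∀ j ∈ S, b i * b j * ((Nat.choose m (S.card - 1) : ℚ) * LPW S (Function.update b j (b j + b i)) * LPV (m + 1 - S.card) c ((A.erase i) \ S) (Function.update b j (b j + b i)))
          = b i * b j * ((Nat.choose m (S.card - 1) : ℚ) *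
            LPW S (Function.update b j (b j + b i)) * LPV (m + 1 - S.card) c ((A.erase i) \ S) b) := by
        intro j hj
        rw [LPV_congr _ _ _ (Function.update b j (b j + b i)) b]
        intro k hk
        have : k ≠ j := by rintro rfl; exact (Finset.mem_sdiff.1 hk).2 hj
        simp [this]
      rw [Finset.sum_congr rfl e3, Finset.sum_congr rfl e4, ← Finset.mul_sum]
      ring
    rw [Finset.sum_congr rfl e1, ← Finset.mul_sum, Finset.sum_add_distrib, LP_swap1, LP_swap2,
      ← Finset.sum_add_distrib]
    congr 1
    refine Finset.sum_congr rfl fun S hS => ?_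
    rw [Finset.mem_powerset] at hS
    rcases Finset.eq_empty_or_nonempty S with rfl | hne
    · simp [LPW]
    have hpos := hne.card_pos
    have hle := Finset.card_le_card hS
    obtain ⟨s, hs⟩ : ∃ s, S.card = s + 1 := ⟨S.card - 1, by omega⟩
    have hsd : ∀ i ∈ S, A.erase i \ S.erase i = A \ S := by
      intro i hi
      ext k; simp only [Finset.mem_sdiff, Finset.mem_erase]
      constructor
      · rintro ⟨⟨h1, h2⟩, h3⟩; exact ⟨h2, fun h => h3 ⟨h1, h⟩⟩
      · rintro ⟨h1, h2⟩; exact ⟨⟨fun h => h2 (h ▸ hi), h1⟩, fun h => h2 h.2⟩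
    have e5 : ∀ i ∈ S, ∑ j ∈ S.erase i, b i * b j * ((Nat.choose m ((S.erase i).card - 1) : ℚ) *
            LPW (S.erase i) (Function.update b j (b j + b i)) * LPV (m + 1 - (S.erase i).card) c ((A.erase i) \ S.erase i) b)
        = (∑ j ∈ S.erase i, b i * b j * LPW (S.erase i) (Function.update b j (b j + b i))) * ((Nat.choose m (s - 1) : ℚ) * LPV (m + 1 - s) c (A \ S) b) := by
      intro i hi
      have : (S.erase i).card = s := by rw [Finset.card_erase_of_mem hi]; omega
      rw [hsd i hi, this, Finset.sum_mul]
      refine Finset.sum_congr rfl fun j _ => by ring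
    rw [Finset.sum_congr rfl e5, ← Finset.sum_mul, ← Finset.mul_sum, hs]
    simp only [Nat.add_sub_cancel]
    have e6 : s ≤ m → ∑ i ∈ A \ S, (b i * (c + b i) * LPV (m + 1 - (s+1)) (c + b i) ((A \ S).erase i) b
           + ∑ j ∈ (A \ S).erase i, b i * b j * LPV (m + 1 - (s+1)) c ((A \ S).erase i) (Function.update b j (b j + b i))) = LPV (m + 1 - s) c (A \ S) b := by
      intro h
      obtain ⟨t, rfl⟩ : ∃ t, m = s + t := ⟨m - s, by omega⟩
      have h1 : s + t + 1 - (s+1) = t := by omega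
      have h2 : s + t + 1 - s = t + 1 := by omega
      rw [h1, h2, LPV]
    have h3 : m + 1 + 1 - (s + 1) = m + 1 - s := by omega
    rw [h3]
    rcases Nat.eq_zero_or_pos s with rfl | hs0
    · rw [e6 (Nat.zero_le _)]
      obtain ⟨a, rfl⟩ := Finset.card_eq_one.1 (by simpa using hs)
      simp
    · rw [LPW_rec S b (by omega)]
      obtain ⟨u, rfl⟩ : ∃ u, s = u + 1 := ⟨s - 1, by omega⟩
      rw [Nat.choose_succ_succ]
      simp only [Nat.add_sub_cancel]
      by_cases h : u + 1 ≤ m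
      · rw [e6 h]; push_cast; ring
      · rw [Nat.choose_eq_zero_of_lt (by omega : m < u + 1)]; push_cast; ring

open Polynomial in
/-- Abel polynomials -/
noncomputable def LPp (n : ℕ) : ℚ[X] := if n = 0 then 1 else X * (X + C (n:ℚ)) ^ (n - 1)

open Polynomial in
theorem LPp_deriv (n : ℕ) : derivative (LPp (n+1)) = C ((n:ℚ)+1) * (LPp n).comp (X + 1) := by
  rcases n with _ | n
  · simp [LPp]
  · have : n + 1 + 1 - 1 = n + 1 := rfl
    simp only [LPp, if_neg (Nat.succ_ne_zero _), this, derivative_mul, derivative_X, derivative_pow,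
      derivative_add, derivative_C, Nat.add_sub_cancel, mul_comp, pow_comp, add_comp, X_comp, C_comp]
    simp only [Nat.cast_add, Nat.cast_one, C_add, map_one, pow_succ]
    ring

theorem LPp_zero (n : ℕ) : (LPp (n+1)).eval 0 = 0 := by simp [LPp]

open Polynomial in
theorem LPp_binom (n : ℕ) (y : ℚ) :
    ∑ k ∈ Finset.range (n+1), C ((n.choose k : ℚ) * (LPp (n-k)).eval y) * LPp k
      = (LPp n).comp (X + C y) := by
  induction n with
  | zero => simp [LPp]
  | succ n ih =>
    apply Polynomial.funext
    have hd : derivative (∑ k ∈ Finset.range (n+1+1), C (((n+1).choose k : ℚ) * (LPp (n+1-k)).eval y) * LPp k)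
      = derivative ((LPp (n+1)).comp (X + C y)) := by
      rw [derivative_comp, LPp_deriv, derivative_sum, Finset.sum_range_succ']
      simp only [derivative_mul, derivative_C, LPp_deriv, zero_mul, zero_add]
      have h0 : derivative (LPp 0) = 0 := by simp [LPp]
      rw [h0, mul_zero, add_zero]
      have ih2 := congrArg (fun p : ℚ[X] => C ((n:ℚ)+1) * p.comp (X+1)) ih
      simp only [Polynomial.sum_comp, Finset.mul_sum, mul_comp, C_comp, comp_assoc] at ih2
      simp only [derivative_add, derivative_X, derivative_C, add_zero, one_mul, mul_comp, C_comp, comp_assoc]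
      have e : (X + 1 : ℚ[X]).comp (X + C y) = (X + C y : ℚ[X]).comp (X + 1) := by
        simp; ring
      rw [e, ← ih2]
      refine Finset.sum_congr rfl fun k _ => ?_
      have hch : (((n+1).choose (k+1) : ℕ):ℚ) * ((k:ℚ)+1) = ((n:ℚ)+1) * (n.choose k : ℕ) := by
        have := Nat.add_one_mul_choose_eq n k
        exact_mod_cast this.symm
      have : n + 1 - (k+1) = n - k := by omega
      rw [this, ← mul_assoc, ← mul_assoc, ← C_mul, ← C_mul]
      congr 2
      linear_combination (eval y (LPp (n-k))) * hch
    have h0 : (∑ k ∈ Finset.range (n+1+1), C (((n+1).choose k : ℚ) * (LPp (n+1-k)).eval y) * LPp k).eval 0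
      = ((LPp (n+1)).comp (X + C y)).eval 0 := by
      rw [eval_finsetSum, Finset.sum_range_succ']
      simp [LPp_zero]
      simp [LPp]
    intro x
    set p := ∑ k ∈ Finset.range (n+1+1), C (((n+1).choose k : ℚ) * (LPp (n+1-k)).eval y) * LPp k
    set q := (LPp (n+1)).comp (X + C y)
    have h1 : derivative (p - q) = 0 := by rw [derivative_sub, hd, sub_self]
    rw [Polynomial.derivative_eq_zero] at h1
    have h2 := Polynomial.eq_C_of_natDegree_eq_zero h1
    have h3 : eval x (p - q) = eval 0 (p - q) := by rw [h2]; simp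
    rw [eval_sub, eval_sub, h0, sub_self] at h3
    linarith

noncomputable def LPc (a k : ℕ) : ℚ := 2 ^ a * (LPp a).eval (k:ℚ) / (Nat.factorial a : ℚ)

theorem LPc_conv (n k : ℕ) :
    ∑ x ∈ Finset.HasAntidiagonal.antidiagonal n, LPc x.1 1 * LPc x.2 k = LPc n (k+1) := by
  have h := congrArg (Polynomial.eval (1:ℚ)) (LPp_binom n k)
  rw [Polynomial.eval_finsetSum] at h
  rw [Finset.Nat.sum_antidiagonal_eq_sum_range_succ_mk]
  have h2 : LPc n (k+1) = 2 ^ n / (Nat.factorial n : ℚ) * Polynomial.eval (1:ℚ) ((LPp n).comp (Polynomial.X + Polynomial.C (k:ℚ))) := by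
    simp [LPc, add_comm]; ring
  rw [h2, ← h, Finset.mul_sum]
  refine Finset.sum_congr rfl fun a ha => ?_
  have ha' : a ≤ n := by simpa [Nat.lt_succ_iff] using ha
  simp only [LPc, Polynomial.eval_mul, Polynomial.eval_C, Nat.cast_one]
  rw [Nat.cast_choose ℚ ha']
  obtain ⟨b, rfl⟩ := Nat.exists_eq_add_of_le ha'
  rw [Nat.add_sub_cancel_left, pow_add]
  have := Nat.factorial_ne_zero a
  have := Nat.factorial_ne_zero b
  have := Nat.factorial_ne_zero (a+b)
  field_simp

noncomputable def LPv (n : ℕ) : ℚ := ∑ x ∈ Finset.HasAntidiagonal.antidiagonal n, LPc x.1 x.2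

theorem LPv_rec (n : ℕ) : LPv (n+1) = ∑ x ∈ Finset.HasAntidiagonal.antidiagonal n, LPc x.1 1 * LPv x.2 := by
  have h : LPv (n+1) = ∑ x ∈ Finset.HasAntidiagonal.antidiagonal n, LPc x.1 (x.2+1) := by
    rw [LPv, Finset.Nat.sum_antidiagonal_succ']
    have : LPc (n+1) 0 = 0 := by simp [LPc, LPp_zero]
    simp [this]
  rw [h]
  rw [Finset.sum_congr rfl fun x _ => (LPc_conv x.1 x.2).symm]
  simp only [LPv, Finset.mul_sum]
  rw [Finset.sum_sigma', Finset.sum_sigma']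
  refine Finset.sum_bij' (fun x _ => ⟨(x.2.1, x.2.2 + x.1.2), (x.2.2, x.1.2)⟩)
    (fun x _ => ⟨(x.1.1 + x.2.1, x.2.2), (x.1.1, x.2.1)⟩) ?_ ?_ ?_ ?_ ?_
  all_goals
    rintro ⟨⟨a, b⟩, ⟨c, d⟩⟩ h
    simp only [Finset.mem_sigma, Finset.HasAntidiagonal.mem_antidiagonal] at h ⊢
  · exact ⟨by omega, trivial⟩
  · exact ⟨by omega, trivial⟩
  · obtain ⟨h1, h2⟩ := h; subst h2; rfl
  · obtain ⟨h1, h2⟩ := h; subst h2; rfl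

theorem LPv_final (n : ℕ) (hn : 1 ≤ n) : (Nat.factorial n : ℚ)^2 * LPv n =
      (Nat.factorial n : ℚ) * (Nat.factorial (n - 1) : ℚ) *
        ∑ j ∈ Finset.range n, ((n : ℚ) - (j : ℚ)) * (2 * (n : ℚ)) ^ j / (Nat.factorial j : ℚ) := by
  have h : LPv n = 1 / n * ∑ j ∈ Finset.range n, ((n : ℚ) - (j : ℚ)) * (2 * (n : ℚ)) ^ j / (Nat.factorial j : ℚ) := by
    have hn0 : (n:ℚ) ≠ 0 := by positivity
    rw [LPv, Finset.Nat.sum_antidiagonal_eq_sum_range_succ_mk, Finset.sum_range_succ, Finset.mul_sum]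
    have h0 : LPc n (n - n) = 0 := by
      obtain ⟨m, rfl⟩ := Nat.exists_eq_add_of_le' hn
      simp [LPc, LPp_zero]
    rw [h0, add_zero]
    refine Finset.sum_congr rfl fun j hj => ?_
    have hj' : j ≤ n := (Finset.mem_range.1 hj).le
    simp only [LPc, LPp, Nat.cast_sub hj']
    rcases j with _ | j
    · simp; field_simp
    · have := Nat.factorial_ne_zero (j+1)
      simp only [Nat.succ_ne_zero, if_false, Nat.add_sub_cancel, Polynomial.eval_mul, Polynomial.eval_X, Polynomial.eval_pow, Polynomial.eval_add, Polynomial.eval_C, sub_add_cancel]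
      rw [mul_pow, pow_succ (n:ℚ)]
      field_simp
  obtain ⟨m, rfl⟩ := Nat.exists_eq_add_of_le' hn
  rw [h, Nat.add_sub_cancel, Nat.factorial_succ]
  push_cast
  field_simp

theorem LPV_ones {ι : Type*} [DecidableEq ι] (m : ℕ) : ∀ (A : Finset ι), A.card = m →
    LPV m 0 A (fun _ => 1) = (Nat.factorial m : ℚ)^2 * LPv m := by
  induction m using Nat.strong_induction_on with
  | _ m ih =>
    intro A hA
    rcases m with _ | m
    · simp [LPV, LPv, LPc, LPp]
    rw [LPV_renewal m 0 A _ hA]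
    obtain ⟨F, hF⟩ : ∃ F : ℕ → ℚ, F = (fun s : ℕ => (Nat.choose m (s - 1) : ℚ) * (if s = 0 then 0 else (Nat.factorial (s - 1) : ℚ) * (2 * s) ^ (s - 1)) * ((Nat.factorial (m+1-s) : ℚ)^2 * LPv (m+1-s))) := ⟨_, rfl⟩
    have e : ∀ S ∈ A.powerset, (Nat.choose m (S.card - 1) : ℚ) * LPW S (fun _ => 1) * LPV (m + 1 - S.card) 0 (A \ S) (fun _ => 1)
        = F S.card := by
      intro S hS
      rw [Finset.mem_powerset] at hS
      simp only [LPW, hF, Finset.card_eq_zero]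
      by_cases h : S = ∅
      · simp [h]
      · have := Finset.card_pos.2 (Finset.nonempty_iff_ne_empty.2 h)
        rw [if_neg h, if_neg h, ih (m+1-S.card) (by omega) (A \ S) (by rw [Finset.card_sdiff_of_subset hS, hA])]
        simp
    rw [Finset.sum_congr rfl e, Finset.sum_powerset_apply_card F, hA, Finset.sum_range_succ', LPv_rec,
      Finset.Nat.sum_antidiagonal_eq_sum_range_succ_mk]
    simp only [hF, if_true, mul_zero, zero_mul, smul_zero, add_zero, Nat.add_sub_cancel, Nat.succ_ne_zero, if_false,
      Finset.sum_const, hA, zero_add, nsmul_eq_mul, mul_one]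
    rw [Finset.mul_sum, Finset.mul_sum]
    refine Finset.sum_congr rfl fun a ha => ?_
    have ha' : a ≤ m := by simpa [Nat.lt_succ_iff] using ha
    obtain ⟨b, rfl⟩ := Nat.exists_eq_add_of_le ha'
    have h1 : a + b + 1 - (a + 1) = b := by omega
    have h2 : a + b - a = b := by omega
    rw [Nat.cast_choose ℚ ha', Nat.cast_choose ℚ (by omega : a + 1 ≤ a + b + 1), h1, h2]
    have h3 : LPc a 1 * (a+1) = (2 * ((a:ℚ)+1))^a / (Nat.factorial a : ℚ) := by
      rcases a with _ | a
      · simp [LPc, LPp]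
      · simp only [LPc, LPp, Nat.succ_ne_zero, if_false, Nat.add_sub_cancel, Polynomial.eval_mul, Polynomial.eval_X, Polynomial.eval_pow, Polynomial.eval_add, Polynomial.eval_C, mul_pow]
        push_cast
        ring
    have h4 : LPc a 1 = (2 * ((a:ℚ)+1))^a / (Nat.factorial a : ℚ) / (a+1) := by
      rw [← h3]; field_simp
    rw [h4, Nat.factorial_succ a, Nat.factorial_succ (a+b)]
    have := Nat.factorial_ne_zero a
    have := Nat.factorial_ne_zero b
    have := Nat.factorial_ne_zero (a+b)
    push_cast
    field_simp

def LPdest (n : ℕ) (f : Fin n → Fin n) (occ : List (Fin n)) (v : Fin n) : Option (Fin n) :=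
  ((List.range n).find? (fun i => decide (f^[i] v ∉ occ))).map (fun i => f^[i] v)

theorem LP_parkAux_cons (n : ℕ) (f : Fin n → Fin n) (occ : List (Fin n)) (v : Fin n)
    (l : List (Fin n)) :
    parkAux n f occ (v :: l) = (LPdest n f occ v).bind (fun j => parkAux n f (j :: occ) l) := by
  rw [parkAux, LPdest]
  cases (List.range n).find? (fun i => decide (f^[i] v ∉ occ)) <;> rfl

def LPR {n : ℕ} (f : Fin n → Fin n) (occ : List (Fin n)) (v k : Fin n) : Prop :=
  ∃ i, f^[i] v = k ∧ k ∉ occ ∧ ∀ t < i, f^[t] v ∈ occ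

theorem LPdest_iff (n : ℕ) (f : Fin n → Fin n) (occ : List (Fin n)) (v k : Fin n) :
    LPdest n f occ v = some k ↔ LPR f occ v k := by
  rw [LPdest, Option.map_eq_some_iff]
  simp only [List.find?_range_eq_some]
  constructor
  · rintro ⟨i, ⟨h1, h2, h3⟩, rfl⟩
    refine ⟨i, rfl, by simpa using h1, fun t ht => ?_⟩
    simpa using h3 t ht
  · rintro ⟨i, rfl, h2, h3⟩
    refine ⟨i, ⟨by simpa using h2, ?_, fun t ht => by simpa using h3 t ht⟩, rfl⟩
    have hinj : Function.Injective (fun t : Fin (i+1) => f^[(t:ℕ)] v) := by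
      have aux : ∀ a b : ℕ, a < b → b ≤ i → f^[a] v ≠ f^[b] v := by
        intro a b hab hb heq
        apply h2
        have : f^[i] v = f^[i - b + a] v := by
          rw [Function.iterate_add_apply, heq, ← Function.iterate_add_apply]
          congr 2; omega
        rw [this]
        exact h3 _ (by omega)
      intro a b hab
      by_contra hne
      rcases lt_or_gt_of_ne (fun h => hne (Fin.ext h) : (a:ℕ) ≠ b) with h | h
      · exact aux _ _ h (by omega) hab
      · exact aux _ _ h (by omega) hab.symm
    have := Fintype.card_le_of_injective _ hinj
    simp at this
    rw [List.mem_range]; omega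

theorem LPdest_congr (n : ℕ) (f g : Fin n → Fin n) (occ : List (Fin n)) (v : Fin n)
    (h : ∀ x ∈ occ, f x = g x) : LPdest n f occ v = LPdest n g occ v := by
  have aux : ∀ (f g : Fin n → Fin n), (∀ x ∈ occ, f x = g x) → ∀ k, LPR f occ v k → LPR g occ v k := by
    rintro f g h k ⟨i, h1, h2, h3⟩
    have : ∀ t ≤ i, f^[t] v = g^[t] v := by
      intro t
      induction t with
      | zero => intro _; rfl
      | succ t ih =>
        intro ht
        rw [Function.iterate_succ_apply', Function.iterate_succ_apply', ← ih (by omega)]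
        exact h _ (h3 t (by omega))
    exact ⟨i, by rw [← this i le_rfl, h1], h2, fun t ht => this t ht.le ▸ h3 t ht⟩
  ext k
  rw [LPdest_iff, LPdest_iff]
  exact ⟨aux f g h k, aux g f (fun x hx => (h x hx).symm) k⟩

theorem LPR_self {n : ℕ} (f : Fin n → Fin n) (occ : List (Fin n)) (v : Fin n) (h : v ∉ occ) :
    LPR f occ v v := ⟨0, rfl, h, fun t ht => absurd ht (Nat.not_lt_zero _)⟩

theorem LPR_step {n : ℕ} (f : Fin n → Fin n) (occ : List (Fin n)) (v k : Fin n) (h : v ∈ occ)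
    (hr : LPR f occ (f v) k) : LPR f occ v k := by
  obtain ⟨i, h1, h2, h3⟩ := hr
  refine ⟨i+1, h1, h2, fun t ht => ?_⟩
  rcases t with _ | t
  · exact h
  · exact h3 t (by omega)

theorem LPdest_cons (n : ℕ) (f : Fin n → Fin n) (occ : List (Fin n)) (v j k : Fin n)
    (hj : j ∉ occ) : LPdest n f (j :: occ) v = some k ↔ k ≠ j ∧ (LPdest n f occ v = some k ∨
      (LPdest n f occ v = some j ∧ LPdest n f occ (f j) = some k)) := by
  simp only [LPdest_iff]
  constructor
  · rintro ⟨i, h1, h2, h3⟩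
    rw [List.mem_cons, not_or] at h2
    refine ⟨h2.1, ?_⟩
    induction i generalizing v with
    | zero => left; exact ⟨0, h1, h2.2, fun t ht => absurd ht (Nat.not_lt_zero _)⟩
    | succ i ih =>
      have := ih (f v) h1 (fun t ht => h3 (t+1) (by omega))
      rcases List.mem_cons.1 (h3 0 (by omega)) with h | h
      · simp only [Function.iterate_zero, id] at h
        subst h
        right
        exact ⟨LPR_self f occ _ hj, this.elim id fun h => h.2⟩
      · rcases this with h4 | h4
        · exact Or.inl (LPR_step f occ v k h h4)
        · exact Or.inr ⟨LPR_step f occ v j h h4.1, h4.2⟩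
  · rintro ⟨hk, ⟨i, h1, h2, h3⟩ | ⟨⟨i, h1, h2, h3⟩, ⟨i', h1', h2', h3'⟩⟩⟩
    · exact ⟨i, h1, by simp [hk, h2], fun t ht => List.mem_cons_of_mem _ (h3 t ht)⟩
    · induction i generalizing v with
      | zero =>
        have : v = j := h1
        subst this
        exact LPR_step f _ _ _ (by simp) ⟨i', h1', by simp [hk, h2'], fun t ht => List.mem_cons_of_mem _ (h3' t ht)⟩
      | succ i ih =>
        exact LPR_step f _ _ _ (List.mem_cons_of_mem _ (h3 0 (by omega)))
          (ih (f v) h1 (fun t ht => h3 (t+1) (by omega)))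

theorem LPdest_notMem {n : ℕ} {f : Fin n → Fin n} {occ : List (Fin n)} {v k : Fin n}
    (h : LPdest n f occ v = some k) : k ∉ occ := by
  rw [LPdest_iff] at h; exact h.choose_spec.2.1

/-- size of the basin of `k` -/
def LPb (n : ℕ) (f : Fin n → Fin n) (occ : List (Fin n)) (k : Fin n) : ℚ :=
  ∑ v, if LPdest n f occ v = some k then 1 else 0

def LPA (n : ℕ) (occ : List (Fin n)) : Finset (Fin n) := Finset.univ.filter (· ∉ occ)

theorem LPA_cons (n : ℕ) (occ : List (Fin n)) (j : Fin n) : LPA n (j :: occ) = (LPA n occ).erase j := by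
  ext k; simp [LPA]

theorem LP_sum_dest (n : ℕ) (f : Fin n → Fin n) (occ : List (Fin n)) (B : Finset (Fin n)) (G : Fin n → ℚ) :
    ∑ v, ∑ j ∈ B, (if LPdest n f occ v = some j then G j else 0)
      = ∑ j ∈ B, LPb n f occ j * G j := by
  rw [Finset.sum_comm]
  refine Finset.sum_congr rfl fun j _ => ?_
  rw [LPb, Finset.sum_mul]
  refine Finset.sum_congr rfl fun v _ => ?_
  split_ifs <;> simp

theorem LPb_upd_some (n : ℕ) (g : Fin n → Fin n) (occ : List (Fin n)) (j y i k : Fin n)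
    (hj : j ∉ occ) (hij : i ≠ j) (hk : k ≠ j) (hy : LPdest n g occ y = some i) :
    LPb n (Function.update g j y) (j :: occ) k
      = Function.update (LPb n g occ) i (LPb n g occ i + LPb n g occ j) k := by
  have hc : ∀ x ∈ occ, Function.update g j y x = g x := fun x hx => by
    rw [Function.update_of_ne]; rintro rfl; exact hj hx
  have : ∀ v, LPdest n (Function.update g j y) (j :: occ) v = some k ↔
      (LPdest n g occ v = some k ∨ (LPdest n g occ v = some j ∧ i = k)) := by
    intro v
    rw [LPdest_cons _ _ _ _ _ _ hj, LPdest_congr n _ g occ _ hc, LPdest_congr n _ g occ _ hc,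
      Function.update_self, hy, Option.some_inj]
    simp [hk]
  unfold LPb
  simp only [this]
  by_cases hik : i = k
  · subst hik
    rw [Function.update_self, ← Finset.sum_add_distrib]
    refine Finset.sum_congr rfl fun v _ => ?_
    by_cases h1 : LPdest n g occ v = some i
    · simp [h1, hij]
    · simp [h1]
  · rw [Function.update_of_ne (Ne.symm hik)]
    simp [hik]

theorem LPb_upd_none (n : ℕ) (g : Fin n → Fin n) (occ : List (Fin n)) (j y k : Fin n)
    (hj : j ∉ occ) (hk : k ≠ j) (hy : ∀ i, i ≠ j → LPdest n g occ y ≠ some i) :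
    LPb n (Function.update g j y) (j :: occ) k = LPb n g occ k := by
  have hc : ∀ x ∈ occ, Function.update g j y x = g x := fun x hx => by
    rw [Function.update_of_ne]; rintro rfl; exact hj hx
  have : ∀ v, LPdest n (Function.update g j y) (j :: occ) v = some k ↔
      LPdest n g occ v = some k := by
    intro v
    rw [LPdest_cons _ _ _ _ _ _ hj, LPdest_congr n _ g occ _ hc, LPdest_congr n _ g occ _ hc,
      Function.update_self]
    simp [hk, hy k hk]
  unfold LPb
  simp only [this]

open Classical in
noncomputable def LPcount (n m : ℕ) (occ : List (Fin n)) (g : Fin n → Fin n) : ℚ :=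
  ∑ f : Fin n → Fin n, ∑ s : Fin m → Fin n,
    if (∀ x ∈ occ, f x = g x) ∧ (parkAux n f occ (List.ofFn s)).isSome then 1 else 0

theorem LPcount_succ (n m : ℕ) (occ : List (Fin n)) (g : Fin n → Fin n) :
    LPcount n (m+1) occ g = ∑ v, ∑ j ∈ LPA n occ, if LPdest n g occ v = some j then
      ∑ y, LPcount n m (j :: occ) (Function.update g j y) else 0 := by
  classical
  unfold LPcount
  have h1 : ∀ f : Fin n → Fin n, ∀ P : (Fin (m+1) → Fin n) → ℚ,
      ∑ s, P s = ∑ v, ∑ s' : Fin m → Fin n, P (Fin.cons v s') := by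
    intro f P
    rw [← (Fin.consEquiv (fun _ => Fin n)).sum_comp, Fintype.sum_prod_type]
    rfl
  rw [Finset.sum_congr rfl fun f _ => h1 f _, Finset.sum_comm]
  refine Finset.sum_congr rfl fun v _ => ?_
  simp only [List.ofFn_cons, LP_parkAux_cons]
  rcases hd : LPdest n g occ v with _ | j
  · simp only [reduceCtorEq, if_false, Finset.sum_const_zero]
    refine Finset.sum_eq_zero fun f _ => Finset.sum_eq_zero fun s _ => ?_
    rw [if_neg]
    rintro ⟨h, h2⟩
    rw [LPdest_congr n f g occ v h, hd] at h2
    simp at h2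
  · have hj := LPdest_notMem hd
    have hjA : j ∈ LPA n occ := by simp [LPA, hj]
    simp only [Option.some_inj]
    rw [Finset.sum_ite_eq, if_pos hjA]
    conv_rhs => rw [Finset.sum_comm]
    refine Finset.sum_congr rfl fun f _ => ?_
    conv_rhs => rw [Finset.sum_comm]
    refine Finset.sum_congr rfl fun s _ => ?_
    have h2 : ∀ y, ((∀ x ∈ j :: occ, f x = Function.update g j y x) ∧ (parkAux n f (j::occ) (List.ofFn s)).isSome)
        ↔ (f j = y ∧ ((∀ x ∈ occ, f x = g x) ∧ ((LPdest n f occ v).bind fun j => parkAux n f (j::occ) (List.ofFn s)).isSome)) := by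
      intro y
      have h3 : (∀ x ∈ j :: occ, f x = Function.update g j y x) ↔ (f j = y ∧ ∀ x ∈ occ, f x = g x) := by
        rw [List.forall_mem_cons, Function.update_self]
        refine and_congr_right fun _ => forall₂_congr fun x hx => ?_
        rw [Function.update_of_ne]; rintro rfl; exact hj hx
      rw [h3, and_assoc]
      refine and_congr_right fun _ => and_congr_right fun h => ?_
      rw [LPdest_congr n f g occ v h, hd]; rfl
    simp only [h2, ite_and]
    rw [Finset.sum_ite_eq, if_pos (Finset.mem_univ _)]

theorem LPcount_eq (n m : ℕ) : ∀ (occ : List (Fin n)) (g : Fin n → Fin n),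
    (LPA n occ).card = m → LPcount n m occ g =
      LPV m (n - ∑ k ∈ LPA n occ, LPb n g occ k) (LPA n occ) (LPb n g occ) := by
  induction m with
  | zero =>
    intro occ g h
    have hall : ∀ x, x ∈ occ := by
      intro x
      by_contra hx
      have : x ∈ LPA n occ := by simp [LPA, hx]
      rw [Finset.card_eq_zero.1 h] at this
      simp at this
    have h2 : ∀ f : Fin n → Fin n, (∀ x ∈ occ, f x = g x) ↔ f = g := fun f =>
      ⟨fun h => funext fun x => h x (hall x), fun h x _ => by rw [h]⟩
    simp [LPcount, LPV, parkAux, h2]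
  | succ m ih =>
    intro occ g h
    rw [LPcount_succ, LP_sum_dest, LPV]
    refine Finset.sum_congr rfl fun j hjA => ?_
    have hj : j ∉ occ := by simpa [LPA] using hjA
    have hcard : (LPA n (j :: occ)).card = m := by
      rw [LPA_cons, Finset.card_erase_of_mem hjA]; omega
    set A := LPA n occ with hA
    set b := LPb n g occ with hb
    have hsum := Finset.add_sum_erase A b hjA
    have key : ∀ y, LPcount n m (j :: occ) (Function.update g j y)
        = ∑ i ∈ A.erase j, (if LPdest n g occ y = some i then
            (LPV m (n - ∑ k ∈ A, b k) (A.erase j) (Function.update b i (b i + b j))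
              - LPV m (n - ∑ k ∈ A.erase j, b k) (A.erase j) b) else 0)
          + LPV m (n - ∑ k ∈ A.erase j, b k) (A.erase j) b := by
      intro y
      rw [ih _ _ hcard, LPA_cons, ← hA]
      by_cases hy : ∃ i, i ≠ j ∧ LPdest n g occ y = some i
      · obtain ⟨i, hij, hy⟩ := hy
        have hiA : i ∈ A.erase j := by
          have := LPdest_notMem hy
          simp [hA, LPA, hij, this]
        have hb' : ∀ k ∈ A.erase j, LPb n (Function.update g j y) (j :: occ) k
            = Function.update b i (b i + b j) k := fun k hk =>
          LPb_upd_some n g occ j y i k hj hij (Finset.ne_of_mem_erase hk) hy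
        rw [Finset.sum_congr rfl hb', LPV_congr _ _ _ _ _ hb', LP_sum_update A b j i hjA hiA]
        simp only [hy, Option.some_inj]
        rw [Finset.sum_ite_eq, if_pos hiA]
        ring
      · push Not at hy
        have hb' : ∀ k ∈ A.erase j, LPb n (Function.update g j y) (j :: occ) k = b k := fun k hk =>
          LPb_upd_none n g occ j y k hj (Finset.ne_of_mem_erase hk) hy
        rw [Finset.sum_congr rfl hb', LPV_congr _ _ _ _ _ hb', right_eq_add]
        refine Finset.sum_eq_zero fun i hi => ?_
        rw [if_neg (hy i (Finset.ne_of_mem_erase hi))]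
    rw [Finset.sum_congr rfl fun y _ => key y, Finset.sum_add_distrib, LP_sum_dest, ← hb]
    have hc : (n:ℚ) - ∑ k ∈ A, b k + b j = n - ∑ k ∈ A.erase j, b k := by linarith
    rw [hc]
    simp only [mul_sub, Finset.sum_sub_distrib, mul_assoc, ← Finset.mul_sum, ← Finset.sum_mul]
    simp only [Finset.sum_const, Finset.card_univ, Fintype.card_fin, nsmul_eq_mul]
    ring

/-- (Lackner–Panholzer, Theorem 3.3) For every `n ≥ 1`,
`M_n = n! (n-1)! Σ_{j=0}^{n-1} (n-j)(2n)^j / j!`. -/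
theorem lackner_panholzer_theorem_3_3 (n : ℕ) (hn : 1 ≤ n) :
    (MCount n n : ℚ) =
      (Nat.factorial n : ℚ) * (Nat.factorial (n - 1) : ℚ) *
        ∑ j ∈ Finset.range n, ((n : ℚ) - (j : ℚ)) * (2 * (n : ℚ)) ^ j / (Nat.factorial j : ℚ) := by
  classical
  have hA : LPA n [] = Finset.univ := by simp [LPA]
  have hd : ∀ v, LPdest n id [] v = some v := fun v => by
    rw [LPdest_iff]; exact LPR_self _ _ _ (by simp)
  have hb : LPb n id [] = fun _ => 1 := by
    funext k
    simp [LPb, hd]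
  have h1 : (MCount n n : ℚ) = LPcount n n [] id := by
    rw [MCount, Nat.card_eq_fintype_card, Fintype.card_subtype, LPcount, Finset.card_filter,
      Fintype.sum_prod_type]
    push_cast
    simp only [List.not_mem_nil, false_imp_iff, implies_true, true_and]
    refine Finset.sum_congr rfl fun f _ => Finset.sum_congr rfl fun s _ => ?_
    by_cases h : ParkingSucceeds f s
    · rw [if_pos h]; exact (if_pos h).symm
    · rw [if_neg h]; exact (if_neg h).symm
  rw [← LPv_final n hn, h1, LPcount_eq n n [] id (by simp [hA]), hA, hb,
    ← LPV_ones n (Finset.univ : Finset (Fin n)) (by simp)]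
  simp
end

section
/- (Lackner–Panholzer, Corollary 3.4) For every n ≥ 1, the total number F_n of (n,n)-tree parking functions is F_n = ((n−1)!)^2 · Σ_{j=0}^{n−1} (n−j)·(2n)^j / j!. -/
namespace LP
open Finset Classical
set_option linter.unusedSectionVars false

def Cl {V : Type} (f : V → V) (U : Finset V) : Prop := ∀ x ∈ U, f x ∈ U

noncomputable def cnt {V C : Type} [Fintype C] (s : C → V) (U : Finset V) : ℕ :=
  ∑ c, if s c ∈ U then 1 else 0

def Good {V C : Type} [Fintype V] [Fintype C] (e : ℕ) (r : V) (f : V → V) (s : C → V) : Prop :=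
  f r = r ∧ Fintype.card C + 1 = Fintype.card V + e ∧
    ∀ U : Finset V, U.Nonempty → Cl f U → r ∈ U ∧ cnt s U + 1 ≤ U.card + e

abbrev GT (e : ℕ) (V C : Type) [Fintype V] [Fintype C] : Type :=
  {x : V × (V → V) × (C → V) // Good e x.1 x.2.1 x.2.2}

noncomputable def N (e : ℕ) (V C : Type) [Fintype V] [Fintype C] : ℕ := Nat.card (GT e V C)

lemma cnt_union {V C : Type} [Fintype C] (s : C → V) (U W : Finset V) :
    cnt s (U ∪ W) + cnt s (U ∩ W) = cnt s U + cnt s W := by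
  unfold cnt
  rw [← sum_add_distrib, ← sum_add_distrib]
  refine sum_congr rfl fun c _ => ?_
  by_cases h1 : s c ∈ U <;> by_cases h2 : s c ∈ W <;> simp [h1, h2]

lemma cnt_option {V C : Type} [Fintype C] (s : Option C → V) (U : Finset V) :
    cnt s U = (if s none ∈ U then 1 else 0) + cnt (fun c => s (some c)) U := by
  unfold cnt; rw [Fintype.sum_option]

lemma cnt_univ {V C : Type} [Fintype V] [Fintype C] (s : C → V) :
    cnt s univ = Fintype.card C := by
  simp [cnt]

section glue
variable {V C : Type} [Fintype V] [Fintype C] (A : Finset V) (J : Finset C)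

noncomputable def gf (fA : {x // x ∈ A} → {x // x ∈ A}) (v : {x // x ∉ A})
    (fB : {x // x ∉ A} → {x // x ∉ A}) (w : {x // x ∈ A}) (x : V) : V :=
  if h : x ∈ A then (fA ⟨x, h⟩).1 else if x = v.1 then w.1 else (fB ⟨x, h⟩).1

noncomputable def gs (sA : {x // x ∈ J} → {x // x ∈ A})
    (sB : {x // x ∉ J} → {x // x ∉ A}) (x : C) : V :=
  if h : x ∈ J then (sA ⟨x, h⟩).1 else (sB ⟨x, h⟩).1

lemma cnt_gs (sA : {x // x ∈ J} → {x // x ∈ A}) (sB : {x // x ∉ J} → {x // x ∉ A})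
    (U : Finset V) : cnt (gs A J sA sB) U =
      cnt sA (U.subtype (· ∈ A)) + cnt sB (U.subtype (· ∉ A)) := by
  unfold cnt
  rw [← Fintype.sum_subtype_add_sum_subtype (· ∈ J)]
  congr 1
  · refine sum_congr (by ext; simp) fun c _ => ?_
    simp [gs, c.2]
  · refine sum_congr (by ext; simp) fun c _ => ?_
    simp [gs, c.2]

lemma card_split (U : Finset V) : U.card =
      (U.subtype (· ∈ A)).card + (U.subtype (· ∉ A)).card := by
  rw [card_subtype, card_subtype, card_filter_add_card_filter_not]

variable {A J}

/-- key structural facts about the glued structure -/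
lemma glue_key {e : ℕ} {rA : {x // x ∈ A}} {fA : {x // x ∈ A} → {x // x ∈ A}}
    {sA : {x // x ∈ J} → {x // x ∈ A}} {v : {x // x ∉ A}}
    {fB : {x // x ∉ A} → {x // x ∉ A}} {sB : {x // x ∉ J} → {x // x ∉ A}} (w : {x // x ∈ A})
    (hA : Good e rA fA sA) (hB : Good 0 v fB sB) (U : Finset V) (hU : U.Nonempty)
    (hc : Cl (gf A fA v fB w) U) :
    rA.1 ∈ U ∧ ((U ⊆ A ∧ cnt (gs A J sA sB) U + 1 ≤ U.card + e) ∨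
      cnt (gs A J sA sB) U + 2 ≤ U.card + e) := by
  have hcA : Cl fA (U.subtype (· ∈ A)) := by
    intro x hx
    have := hc x.1 (by simpa using hx)
    simpa [gf] using this
  have hcB : Cl fB (U.subtype (· ∉ A)) := by
    intro x hx
    by_cases hxv : x = v
    · subst hxv; rw [hB.1]; exact hx
    have := hc x.1 (by simpa using hx)
    have h2 : x.1 ≠ v.1 := fun h => hxv (Subtype.ext h)
    simpa [gf, x.2, h2] using this
  rw [cnt_gs, card_split A U]
  have neA : (U.subtype (· ∈ A)).Nonempty := by
    obtain ⟨x, hx⟩ := hU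
    by_cases hxA : x ∈ A
    · exact ⟨⟨x, hxA⟩, by simpa using hx⟩
    · have := (hB.2.2 _ ⟨⟨x, hxA⟩, by simpa using hx⟩ hcB).1
      have := hc v.1 (by simpa using this)
      refine ⟨w, ?_⟩
      simpa [gf, v.2] using this
  have h1 := hA.2.2 _ neA hcA
  refine ⟨by simpa using h1.1, ?_⟩
  by_cases neB : (U.subtype (· ∉ A)).Nonempty
  · have h2 := hB.2.2 _ neB hcB
    right; omega
  · left
    have h3 : U.subtype (· ∉ A) = ∅ := not_nonempty_iff_eq_empty.1 neB
    constructor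
    · intro x hx
      by_contra hxA
      exact neB ⟨⟨x, hxA⟩, by simpa using hx⟩
    · rw [h3]; simp [cnt] at h1 ⊢; exact h1.2

lemma glue_clA {fA : {x // x ∈ A} → {x // x ∈ A}} {v : {x // x ∉ A}}
    {fB : {x // x ∉ A} → {x // x ∉ A}} (w : {x // x ∈ A}) : Cl (gf A fA v fB w) A := by
  intro x hx; simp [gf, hx]

lemma cnt_gs_A (sA : {x // x ∈ J} → {x // x ∈ A}) (sB : {x // x ∉ J} → {x // x ∉ A}) :
    cnt (gs A J sA sB) A = J.card := by
  rw [cnt_gs]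
  have : A.subtype (· ∉ A) = ∅ := by ext x; simp [x.2]
  rw [this]; simp [cnt]

lemma cardC {e : ℕ} {rA : {x // x ∈ A}} {fA : {x // x ∈ A} → {x // x ∈ A}}
    {sA : {x // x ∈ J} → {x // x ∈ A}} {v : {x // x ∉ A}}
    {fB : {x // x ∉ A} → {x // x ∉ A}} {sB : {x // x ∉ J} → {x // x ∉ A}}
    (hA : Good e rA fA sA) (hB : Good 0 v fB sB) :
    J.card + 1 = A.card + e ∧ Fintype.card C + 2 = Fintype.card V + e := by
  have h1 := hA.2.1
  have h2 := hB.2.1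
  have h3 := card_split A (univ : Finset V)
  have h4 := card_split J (univ : Finset C)
  simp only [subtype_univ, card_univ] at h3 h4
  rw [Fintype.card_coe] at h1 h3 h4
  rw [Fintype.card_coe] at h1
  omega

lemma glue_good {e : ℕ} {rA : {x // x ∈ A}} {fA : {x // x ∈ A} → {x // x ∈ A}}
    {sA : {x // x ∈ J} → {x // x ∈ A}} {v : {x // x ∉ A}}
    {fB : {x // x ∉ A} → {x // x ∉ A}} {sB : {x // x ∉ J} → {x // x ∉ A}} (w : {x // x ∈ A})
    (b : {x // x ∉ A}) (hA : Good e rA fA sA) (hB : Good 0 v fB sB) :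
    Good e rA.1 (gf A fA v fB w) (fun o : Option C => o.elim b.1 (gs A J sA sB)) ∧
    ¬ Good 0 rA.1 (gf A fA v fB w) (gs A J sA sB) := by
  have hcard := cardC hA hB
  refine ⟨⟨?_, ?_, ?_⟩, ?_⟩
  · simp [gf, hA.1]
  · rw [Fintype.card_option]; omega
  · intro U hU hc
    have := glue_key w hA hB U hU hc
    refine ⟨this.1, ?_⟩
    rw [cnt_option]
    change (if b.1 ∈ U then 1 else 0) + cnt (gs A J sA sB) U + 1 ≤ U.card + e
    rcases this.2 with ⟨h1, h2⟩ | h2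
    · have : b.1 ∉ U := fun h => b.2 (h1 h)
      simp only [this, if_false]; omega
    · split_ifs <;> omega
  · intro h
    have h1 := h.2.1
    have h2 := (h.2.2 A ⟨_, rA.2⟩ (glue_clA w)).2
    rw [cnt_gs_A] at h2
    omega


lemma mem_gs_iff (sA : {x // x ∈ J} → {x // x ∈ A})
    (sB : {x // x ∉ J} → {x // x ∉ A}) (c : C) : gs A J sA sB c ∈ A ↔ c ∈ J := by
  unfold gs; split_ifs with h
  · simp [h]
  · simp [h, (sB ⟨c, h⟩).2]

lemma mem_gf_iff {fA : {x // x ∈ A} → {x // x ∈ A}} {v : {x // x ∉ A}}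
    {fB : {x // x ∉ A} → {x // x ∉ A}} {w : {x // x ∈ A}} (x : V) (hx : x ∉ A) :
    gf A fA v fB w x ∈ A ↔ x = v.1 := by
  unfold gf; rw [dif_neg hx]; split_ifs with h
  · simp [h]
  · simp [h, (fB ⟨x, hx⟩).2]

variable (V C) in
abbrev DT (e : ℕ) : Type :=
  Σ p : Finset V × Finset C, GT e {x // x ∈ p.1} {x // x ∈ p.2} ×
    GT 0 {x // x ∉ p.1} {x // x ∉ p.2} × {x // x ∈ p.1} × {x // x ∉ p.1}

variable (V C) in
abbrev ET (e : ℕ) : Type :=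
  {x : GT e V (Option C) // ¬ Good 0 x.1.1 x.1.2.1 (fun c => x.1.2.2 (some c))}

noncomputable def glue (e : ℕ) (d : DT V C e) : ET V C e :=
  ⟨⟨(d.2.1.1.1.1, gf d.1.1 d.2.1.1.2.1 d.2.2.1.1.1 d.2.2.1.1.2.1 d.2.2.2.1,
      fun o : Option C => o.elim d.2.2.2.2.1 (gs d.1.1 d.1.2 d.2.1.1.2.2 d.2.2.1.1.2.2)),
    (glue_good d.2.2.2.1 d.2.2.2.2 d.2.1.2 d.2.2.1.2).1⟩,
    (glue_good d.2.2.2.1 d.2.2.2.2 d.2.1.2 d.2.2.1.2).2⟩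

lemma glue_A_sub {e : ℕ} {rA : {x // x ∈ A}} {fA : {x // x ∈ A} → {x // x ∈ A}}
    {sA : {x // x ∈ J} → {x // x ∈ A}} {v : {x // x ∉ A}}
    {fB : {x // x ∉ A} → {x // x ∉ A}} {sB : {x // x ∉ J} → {x // x ∉ A}} (w : {x // x ∈ A})
    (hA : Good e rA fA sA) (hB : Good 0 v fB sB) (U : Finset V) (hU : U.Nonempty)
    (hc : Cl (gf A fA v fB w) U) (ht : cnt (gs A J sA sB) U + 1 = U.card + e) : U ⊆ A := by
  rcases (glue_key w hA hB U hU hc).2 with h | h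
  · exact h.1
  · omega

lemma glue_inj (e : ℕ) : Function.Injective (glue (V := V) (C := C) e) := by
  rintro ⟨⟨A, J⟩, ⟨⟨rA, fA, sA⟩, hA⟩, ⟨⟨v, fB, sB⟩, hB⟩, w, b⟩
    ⟨⟨A', J'⟩, ⟨⟨rA', fA', sA'⟩, hA'⟩, ⟨⟨v', fB', sB'⟩, hB'⟩, w', b'⟩ h
  have h := congrArg (fun y => y.1.1) h
  simp only [glue, Prod.mk.injEq] at h
  dsimp only at hA hB hA' hB'
  obtain ⟨h1, h2, h3⟩ := h
  have h4 : gs A J sA sB = gs A' J' sA' sB' := by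
    funext c; exact congrFun h3 (some c)
  have h5 : b.1 = b'.1 := congrFun h3 none
  have hAA : A = A' := by
    apply Subset.antisymm
    · apply glue_A_sub w' hA' hB' A ⟨_, rA.2⟩
      · rw [← h2]; exact glue_clA w
      · rw [← h4, cnt_gs_A]; exact (cardC hA hB).1
    · apply glue_A_sub w hA hB A' ⟨_, rA'.2⟩
      · rw [h2]; exact glue_clA w'
      · rw [h4, cnt_gs_A]; exact (cardC hA' hB').1
  subst hAA
  have hJJ : J = J' := by
    ext c; rw [← mem_gs_iff sA sB c, h4, mem_gs_iff]
  subst hJJ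
  have e1 : rA = rA' := Subtype.ext h1
  have e2 : fA = fA' := by
    funext x; apply Subtype.ext
    have := congrFun h2 x.1
    simpa [gf] using this
  have e3 : sA = sA' := by
    funext x; apply Subtype.ext
    have := congrFun h4 x.1
    simpa [gs] using this
  have e4 : v = v' := by
    apply Subtype.ext
    rw [← mem_gf_iff (A := A) (fA := fA') (v := v') (fB := fB') (w := w') v.1 v.2, ← h2,
      mem_gf_iff _ v.2]
  subst e4
  have e5 : w = w' := by
    apply Subtype.ext
    have := congrFun h2 v.1
    simpa [gf, v.2] using this
  have e6 : fB = fB' := by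
    funext x
    by_cases hx : x = v
    · rw [hx, hB.1, hB'.1]
    apply Subtype.ext
    have := congrFun h2 x.1
    have hx2 : x.1 ≠ v.1 := fun h => hx (Subtype.ext h)
    simpa [gf, x.2, hx2] using this
  have e7 : sB = sB' := by
    funext x; apply Subtype.ext
    have := congrFun h4 x.1
    simpa [gs, x.2] using this
  have e8 : b = b' := Subtype.ext h5
  subst e1 e2 e3 e5 e6 e7 e8
  rfl

lemma exists_tight {e : ℕ} (he : e ≤ 1) {r : V} {f : V → V} {s : Option C → V} (h : Good e r f s)
    (h0 : ¬ Good 0 r f (fun c => s (some c))) :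
    ∃ U : Finset V, U.Nonempty ∧ Cl f U ∧ cnt (fun c => s (some c)) U + 1 = U.card + e := by
  have hs : ∀ U : Finset V, U.Nonempty → Cl f U →
      cnt (fun c => s (some c)) U + 1 ≤ U.card + e := by
    intro U h1 h2
    have := (h.2.2 U h1 h2).2
    rw [cnt_option] at this
    omega
  have hcd := h.2.1
  rw [Fintype.card_option] at hcd
  by_contra hne
  push Not at hne
  interval_cases e
  · have h1 : Cl f {r} := by intro x hx; simp at hx; simp [hx, h.1]
    have h2 := hs {r} (by simp) h1
    have h3 := hne {r} (by simp) h1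
    simp at h2 h3; omega
  · apply h0
    refine ⟨h.1, by omega, fun U h1 h2 => ⟨(h.2.2 U h1 h2).1, ?_⟩⟩
    have := hs U h1 h2
    have := hne U h1 h2
    omega

lemma exists_max_tight {e : ℕ} (he : e ≤ 1) {r : V} {f : V → V} {s : Option C → V}
    (h : Good e r f s) (h0 : ¬ Good 0 r f (fun c => s (some c))) :
    ∃ A : Finset V, r ∈ A ∧ Cl f A ∧ cnt (fun c => s (some c)) A + 1 = A.card + e ∧
      s none ∉ A ∧
      ∀ U : Finset V, U.Nonempty → Cl f U → ¬ U ⊆ A →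
        cnt (fun c => s (some c)) U + 2 ≤ U.card + e := by
  obtain ⟨U0, hU0⟩ := exists_tight he h h0
  obtain ⟨A, hA, hmax⟩ := exists_max_image
    (univ.filter fun U : Finset V => U.Nonempty ∧ Cl f U ∧
      cnt (fun c => s (some c)) U + 1 = U.card + e) Finset.card ⟨U0, by simpa using hU0⟩
  simp only [mem_filter, mem_univ, true_and] at hA hmax
  have hs : ∀ U : Finset V, U.Nonempty → Cl f U →
      cnt (fun c => s (some c)) U + 1 ≤ U.card + e := by
    intro U h1 h2
    have := (h.2.2 U h1 h2).2
    rw [cnt_option] at this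
    omega
  have hrA := (h.2.2 A hA.1 hA.2.1).1
  refine ⟨A, hrA, hA.2.1, hA.2.2, ?_, ?_⟩
  · intro hn
    have := (h.2.2 A hA.1 hA.2.1).2
    rw [cnt_option, if_pos hn] at this
    omega
  · intro U hU hc hsub
    by_contra hlt
    have ht := hs U hU hc
    have hrU := (h.2.2 U hU hc).1
    have c1 : Cl f (U ∪ A) := by
      intro x hx
      rcases mem_union.1 hx with hx | hx
      · exact mem_union_left _ (hc x hx)
      · exact mem_union_right _ (hA.2.1 x hx)
    have c2 : Cl f (U ∩ A) := by
      intro x hx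
      exact mem_inter.2 ⟨hc x (mem_inter.1 hx).1, hA.2.1 x (mem_inter.1 hx).2⟩
    have n1 : (U ∪ A).Nonempty := ⟨r, by simp [hrA]⟩
    have n2 : (U ∩ A).Nonempty := ⟨r, by simp [hrA, hrU]⟩
    have i1 := hs _ n1 c1
    have i2 := hs _ n2 c2
    have i3 := cnt_union (fun c => s (some c)) U A
    have i4 := card_union_add_card_inter U A
    have i5 := hmax (U ∪ A) ⟨n1, c1, by omega⟩
    have i6 : A = U ∪ A := eq_of_subset_of_card_le subset_union_right i5
    exact hsub (by rw [i6]; exact subset_union_left)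

lemma mem_of_cl {f : V → V} {U : Finset V} (h : Cl f U) {x : V} (hx : x ∈ U) (k : ℕ) :
    f^[k] x ∈ U := by
  induction k with
  | zero => exact hx
  | succ k ih => rw [Function.iterate_succ_apply']; exact h _ ih

lemma exists_root {e : ℕ} (he : e ≤ 1) {r : V} {f : V → V} {s : Option C → V}
    (h : Good e r f s) {A : Finset V} (hrA : r ∈ A) (hcA : Cl f A)
    (htA : cnt (fun c => s (some c)) A + 1 = A.card + e) (hn : s none ∉ A)
    (hmax : ∀ U : Finset V, U.Nonempty → Cl f U → ¬ U ⊆ A →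
        cnt (fun c => s (some c)) U + 2 ≤ U.card + e) :
    ∃ v, v ∉ A ∧ f v ∈ A ∧ ∀ x, x ∉ A → f x ∈ A → x = v := by
  have hex : ∃ v, v ∉ A ∧ f v ∈ A := by
    by_contra hne
    push Not at hne
    have : r ∈ univ.filter (fun x => x ∉ A) :=
      (h.2.2 (univ.filter fun x => x ∉ A) ⟨s none, by simpa using hn⟩ (by
        intro x hx; simp at hx ⊢; exact hne x hx)).1
    simp at this; exact this hrA
  obtain ⟨v, hv, hfv⟩ := hex
  refine ⟨v, hv, hfv, ?_⟩
  set U1 : Finset V := univ.filter (fun x => ¬ ∃ k, f^[k] x = v) with hU1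
  set U2 : Finset V := univ.filter (fun x => x ∈ A ∨ ∃ k, f^[k] x = v) with hU2
  have a1 : A ⊆ U1 := by
    intro x hx
    simp only [hU1, mem_filter, mem_univ, true_and]
    rintro ⟨k, hk⟩
    exact hv (hk ▸ mem_of_cl hcA hx k)
  have c1 : Cl f U1 := by
    intro x hx
    simp only [hU1, mem_filter, mem_univ, true_and] at hx ⊢
    rintro ⟨k, hk⟩
    exact hx ⟨k + 1, by rw [Function.iterate_succ_apply]; exact hk⟩
  have c2 : Cl f U2 := by
    intro x hx
    simp only [hU2, mem_filter, mem_univ, true_and] at hx ⊢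
    rcases hx with hx | ⟨k, hk⟩
    · exact Or.inl (hcA x hx)
    · cases k with
      | zero => left; simp at hk; rw [hk]; exact hfv
      | succ k => right; exact ⟨k, by rw [Function.iterate_succ_apply] at hk; exact hk⟩
  have hu : U1 ∪ U2 = univ := by
    ext x
    by_cases hk : ∃ k, f^[k] x = v
    · simp only [hU1, hU2, mem_union, mem_filter, hk]; simp
    · simp only [hU1, hU2, mem_union, mem_filter, hk]; simp
  have hi : U1 ∩ U2 = A := by
    ext x
    constructor
    · intro hx
      simp [hU1, hU2] at hx
      rcases hx.2 with h' | ⟨k, hk⟩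
      · exact h'
      · exact absurd hk (hx.1 k)
    · intro hx
      exact mem_inter.2 ⟨a1 hx, by simp [hU2, hx]⟩
  have i3 := cnt_union (fun c => s (some c)) U1 U2
  have i4 := card_union_add_card_inter U1 U2
  rw [hu, hi] at i3 i4
  rw [cnt_univ] at i3
  rw [card_univ] at i4
  have i5 := h.2.1
  rw [Fintype.card_option] at i5
  have vU2 : v ∈ U2 := by simp [hU2]; right; exact ⟨0, rfl⟩
  have j2 := hmax U2 ⟨v, vU2⟩ c2 (fun hh => hv (hh vU2))
  have j1 : U1 ⊆ A := by
    by_contra hh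
    have := hmax U1 ⟨r, a1 hrA⟩ c1 hh
    omega
  intro x hx hfx
  have : x ∉ U1 := fun hh => hx (j1 hh)
  simp only [hU1, mem_filter, mem_univ, true_and, not_not] at this
  obtain ⟨k, hk⟩ := this
  cases k with
  | zero => exact hk
  | succ k =>
    rw [Function.iterate_succ_apply] at hk
    exact absurd (hk ▸ mem_of_cl hcA hfx k) hv

lemma cnt_restr (A : Finset V) (J : Finset C) (s : C → V) (hJ : ∀ c, c ∈ J ↔ s c ∈ A)
    (U : Finset V) :
    cnt s U = cnt (fun c : {c // c ∈ J} => (⟨s c.1, (hJ c.1).1 c.2⟩ : {x // x ∈ A}))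
        (U.subtype (· ∈ A)) +
      cnt (fun c : {c // c ∉ J} =>
        (⟨s c.1, fun h => c.2 ((hJ c.1).2 h)⟩ : {x // x ∉ A})) (U.subtype (· ∉ A)) := by
  rw [← cnt_gs]
  congr 1
  funext c
  simp [gs]

lemma glue_surj {e : ℕ} (he : e ≤ 1) : Function.Surjective (glue (V := V) (C := C) e) := by
  rintro ⟨⟨⟨r, f, s⟩, h⟩, h0⟩
  dsimp only at h h0
  obtain ⟨A, hrA, hcA, htA, hn, hmax⟩ := exists_max_tight he h h0
  obtain ⟨v, hv, hfv, huniq⟩ := exists_root he h hrA hcA htA hn hmax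
  set s' : C → V := fun c => s (some c) with hs'
  set J : Finset C := univ.filter (fun c => s' c ∈ A) with hJ
  have hJm : ∀ c, c ∈ J ↔ s' c ∈ A := by intro c; simp [hJ]
  let fA : {x // x ∈ A} → {x // x ∈ A} := fun x => ⟨f x.1, hcA x.1 x.2⟩
  let sA : {c // c ∈ J} → {x // x ∈ A} := fun c => ⟨s' c.1, (hJm c.1).1 c.2⟩
  let sB : {c // c ∉ J} → {x // x ∉ A} := fun c => ⟨s' c.1, fun h => c.2 ((hJm c.1).2 h)⟩
  let fB : {x // x ∉ A} → {x // x ∉ A} := fun x =>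
    if hx : x.1 = v then x else ⟨f x.1, fun h => hx (huniq x.1 x.2 h)⟩
  have hcr : ∀ U, cnt s' U = cnt sA (U.subtype (· ∈ A)) + cnt sB (U.subtype (· ∉ A)) :=
    cnt_restr A J s' hJm
  have cA : cnt s' A = J.card := by
    rw [hcr]
    have : A.subtype (· ∉ A) = ∅ := by ext x; simp [x.2]
    rw [this]; simp [cnt]
  have h5 := h.2.1
  rw [Fintype.card_option] at h5
  have h3 := card_split A (univ : Finset V)
  have h4 := card_split J (univ : Finset C)
  simp only [subtype_univ, card_univ] at h3 h4
  rw [Fintype.card_coe] at h3 h4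
  have gA : Good e (⟨r, hrA⟩ : {x // x ∈ A}) fA sA := by
    refine ⟨Subtype.ext h.1, ?_, ?_⟩
    · rw [Fintype.card_coe, Fintype.card_coe]; omega
    · intro U hU hc
      set W : Finset V := U.map (Function.Embedding.subtype _) with hW
      have e1 : W.subtype (· ∈ A) = U := by ext x; simp [hW]
      have e2 : W.subtype (· ∉ A) = ∅ := by ext x; simp [hW, x.2]
      have hcW : Cl f W := by
        intro x hx
        simp only [hW, mem_map, Function.Embedding.subtype_apply] at hx ⊢
        obtain ⟨y, hy, rfl⟩ := hx
        exact ⟨fA y, hc y hy, rfl⟩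
      have hWn : W.Nonempty := by simpa [hW] using hU
      have := h.2.2 W hWn hcW
      rw [cnt_option] at this
      have h7 : cnt s' W = cnt sA U := by
        rw [hcr, e1, e2]; simp [cnt]
      have h8 : W.card = U.card := card_map _
      refine ⟨?_, ?_⟩
      · rw [← e1]; simpa using this.1
      · have := this.2
        change _ + cnt s' W + 1 ≤ _ at this
        omega
  have gB : Good 0 (⟨v, hv⟩ : {x // x ∉ A}) fB sB := by
    refine ⟨by simp [fB], ?_, ?_⟩
    · omega
    · intro U hU hc
      set W : Finset V := A ∪ U.map (Function.Embedding.subtype _) with hW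
      have e1 : W.subtype (· ∈ A) = univ := by ext x; simp [hW]
      have e2 : W.subtype (· ∉ A) = U := by ext x; simp [hW, x.2]
      have hcW : Cl f W := by
        intro x hx
        simp only [hW, mem_union, mem_map, Function.Embedding.subtype_apply] at hx ⊢
        rcases hx with hx | ⟨y, hy, rfl⟩
        · exact Or.inl (hcA x hx)
        · by_cases hyv : y.1 = v
          · left; rw [hyv]; exact hfv
          · right
            refine ⟨fB y, hc y hy, by simp [fB, hyv]⟩
      have hsub : ¬ W ⊆ A := by
        obtain ⟨y, hy⟩ := hU
        intro hh
        exact y.2 (hh (by simp [hW, y.2, hy]))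
      have := hmax W ⟨r, by simp [hW, hrA]⟩ hcW hsub
      change cnt s' W + 2 ≤ _ at this
      change cnt s' A + 1 = _ at htA
      have h7 : cnt s' W = J.card + cnt sB U := by
        rw [hcr, e1, e2, cnt_univ, Fintype.card_coe]
      have h8 : W.card = A.card + U.card := by
        rw [card_split A W, e1, e2, card_univ, Fintype.card_coe]
      refine ⟨?_, by omega⟩
      by_contra hvU
      have hcU : Cl f (U.map (Function.Embedding.subtype _)) := by
        intro x hx
        simp only [mem_map, Function.Embedding.subtype_apply] at hx ⊢
        obtain ⟨y, hy, rfl⟩ := hx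
        by_cases hyv : y.1 = v
        · exact absurd (by rwa [show y = ⟨v, hv⟩ from Subtype.ext hyv] at hy) hvU
        · exact ⟨fB y, hc y hy, by simp [fB, hyv]⟩
      have := (h.2.2 _ (by simpa using hU) hcU).1
      simp only [mem_map, Function.Embedding.subtype_apply] at this
      obtain ⟨y, hy, hyr⟩ := this
      exact y.2 (hyr ▸ hrA)
  refine ⟨⟨(A, J), ⟨(⟨r, hrA⟩, fA, sA), gA⟩, ⟨(⟨v, hv⟩, fB, sB), gB⟩, ⟨f v, hfv⟩, ⟨s none, hn⟩⟩, ?_⟩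
  refine Subtype.ext (Subtype.ext (Prod.ext rfl (Prod.ext ?_ ?_)))
  · funext x
    by_cases hx : x ∈ A
    · simp [glue, gf, hx, fA]
    · by_cases hxv : x = v
      · subst hxv; simp [glue, gf, hx]
      · simp [glue, gf, hx, hxv, fB]
  · funext o
    cases o with
    | none => rfl
    | some c => simp [glue, gs, sA, sB, hs']
end glue

lemma good_transport {V C V' C' : Type} [Fintype V] [Fintype C] [Fintype V'] [Fintype C']
    (a : V ≃ V') (c : C ≃ C') {e : ℕ} {r : V} {f : V → V} {s : C → V} (h : Good e r f s) :
    Good e (a r) (fun x => a (f (a.symm x))) (fun x => a (s (c.symm x))) := by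
  refine ⟨by simp [h.1], by rw [← Fintype.card_congr a, ← Fintype.card_congr c]; exact h.2.1, ?_⟩
  intro U hU hc
  have hmem : ∀ x, x ∈ U.map a.symm.toEmbedding ↔ a x ∈ U := by
    intro x; simp [mem_map_equiv]
  have := h.2.2 (U.map a.symm.toEmbedding) (by simpa using hU) (by
    intro x hx
    rw [hmem] at hx ⊢
    have := hc _ hx
    simpa using this)
  rw [hmem, card_map] at this
  refine ⟨this.1, ?_⟩
  have h2 : cnt (fun x => a (s (c.symm x))) U = cnt s (U.map a.symm.toEmbedding) := by
    unfold cnt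
    rw [← Equiv.sum_comp c]
    refine sum_congr rfl fun i _ => ?_
    simp only [hmem, Equiv.symm_apply_apply]
  rw [h2]; exact this.2

lemma N_le {V C V' C' : Type} [Fintype V] [Fintype C] [Fintype V'] [Fintype C']
    (a : V ≃ V') (c : C ≃ C') (e : ℕ) : N e V C ≤ N e V' C' := by
  unfold N
  refine Nat.card_le_card_of_injective (fun x : GT e V C =>
    (⟨(a x.1.1, fun y => a (x.1.2.1 (a.symm y)), fun y => a (x.1.2.2 (c.symm y))),
      good_transport a c x.2⟩ : GT e V' C')) ?_
  rintro ⟨⟨r, f, s⟩, h⟩ ⟨⟨r', f', s'⟩, h'⟩ hh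
  have hh := congrArg (fun y => y.1) hh
  simp only [Prod.mk.injEq, EmbeddingLike.apply_eq_iff_eq] at hh
  refine Subtype.ext (Prod.ext hh.1 (Prod.ext ?_ ?_))
  · funext x; have := congrFun hh.2.1 (a x); simpa using this
  · funext x; have := congrFun hh.2.2 (c x); simpa using this

noncomputable def Q (e a b : ℕ) : ℕ := N e (Fin a) (Fin b)

lemma N_eq {V C : Type} [Fintype V] [Fintype C] (e : ℕ) {a b : ℕ} (ha : Fintype.card V = a)
    (hb : Fintype.card C = b) : N e V C = Q e a b := by
  have a := Fintype.equivFinOfCardEq ha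
  have c := Fintype.equivFinOfCardEq hb
  exact le_antisymm (N_le a c e) (N_le a.symm c.symm e)

lemma Q_zero {e a b : ℕ} (h : b + 1 ≠ a + e) : Q e a b = 0 := by
  unfold Q N
  have : IsEmpty (GT e (Fin a) (Fin b)) := ⟨fun x => h (by simpa using x.2.2.1)⟩
  exact Nat.card_of_isEmpty

lemma rec_raw (V C : Type) [Fintype V] [Fintype C] {e : ℕ} (he : e ≤ 1) :
    N e V (Option C) =
      Nat.card {x : GT e V (Option C) // Good 0 x.1.1 x.1.2.1 (fun c => x.1.2.2 (some c))} +
      ∑ A : Finset V, ∑ J : Finset C, Q e A.card J.card *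
        (Q 0 (Fintype.card V - A.card) (Fintype.card C - J.card) *
          (A.card * (Fintype.card V - A.card))) := by
  have h1 : N e V (Option C) =
      Nat.card {x : GT e V (Option C) // Good 0 x.1.1 x.1.2.1 (fun c => x.1.2.2 (some c))} +
      Nat.card (ET V C e) := by
    unfold N
    rw [← Nat.card_sum]
    exact Nat.card_congr (Equiv.sumCompl _).symm
  rw [h1, ← Nat.card_eq_of_bijective _ ⟨glue_inj (V := V) (C := C) e, glue_surj he⟩]
  congr 1
  rw [Nat.card_sigma, Fintype.sum_prod_type]
  refine sum_congr rfl fun A _ => sum_congr rfl fun J _ => ?_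
  have hA : Fintype.card {x // x ∈ A} = A.card := Fintype.card_coe A
  have hJ : Fintype.card {x // x ∈ J} = J.card := Fintype.card_coe J
  have hA' : Fintype.card {x // x ∉ A} = Fintype.card V - A.card := by
    rw [Fintype.card_subtype_compl, hA]
  have hJ' : Fintype.card {x // x ∉ J} = Fintype.card C - J.card := by
    rw [Fintype.card_subtype_compl, hJ]
  rw [Nat.card_prod, Nat.card_prod, Nat.card_prod, ← N_eq e hA hJ, ← N_eq 0 hA' hJ', ← hA', ← hA,
    ← Nat.card_eq_fintype_card, ← Nat.card_eq_fintype_card (α := {x // x ∉ A})]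
  rfl

lemma sum_group (V C : Type) [Fintype V] [Fintype C] (g : ℕ → ℕ → ℕ) :
    ∑ A : Finset V, ∑ J : Finset C, g A.card J.card =
      ∑ a ∈ range (Fintype.card V + 1), (Fintype.card V).choose a *
        ∑ b ∈ range (Fintype.card C + 1), (Fintype.card C).choose b * g a b := by
  have h1 : ∀ a, ∑ J : Finset C, g a J.card =
      ∑ b ∈ range (Fintype.card C + 1), (Fintype.card C).choose b * g a b := by
    intro a
    have := sum_powerset_apply_card (g a) (x := (univ : Finset C))
    simpa using this
  simp only [h1]
  have := sum_powerset_apply_card (fun a => ∑ b ∈ range (Fintype.card C + 1),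
    (Fintype.card C).choose b * g a b) (x := (univ : Finset V))
  simpa using this

lemma first_one (V C : Type) [Fintype V] [Fintype C] (h : Fintype.card C + 1 = Fintype.card V) :
    Nat.card {x : GT 1 V (Option C) // Good 0 x.1.1 x.1.2.1 (fun c => x.1.2.2 (some c))} =
      N 0 V C * Fintype.card V := by
  unfold N
  rw [← Nat.card_eq_fintype_card, ← Nat.card_prod]
  refine Nat.card_congr
    { toFun := fun x => (⟨(x.1.1.1, x.1.1.2.1, fun c => x.1.1.2.2 (some c)), x.2⟩, x.1.1.2.2 none)
      invFun := fun y => ⟨⟨(y.1.1.1, y.1.1.2.1, fun o : Option C => o.elim y.2 y.1.1.2.2), ?_⟩, y.1.2⟩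
      left_inv := ?_
      right_inv := ?_ }
  · obtain ⟨⟨⟨r, f, s⟩, g⟩, b⟩ := y
    dsimp only at g ⊢
    refine ⟨g.1, by rw [Fintype.card_option]; omega, fun U hU hc => ?_⟩
    have := g.2.2 U hU hc
    refine ⟨this.1, ?_⟩
    rw [cnt_option]
    change (if b ∈ U then 1 else 0) + cnt s U + 1 ≤ _
    split_ifs <;> omega
  · rintro ⟨⟨⟨r, f, s⟩, g⟩, g'⟩
    refine Subtype.ext (Subtype.ext (Prod.ext rfl (Prod.ext rfl ?_)))
    funext o; cases o <;> rfl
  · rintro ⟨⟨⟨r, f, s⟩, g⟩, b⟩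
    rfl

lemma rec0 (m : ℕ) : Q 0 (m + 2) (m + 1) = ∑ i ∈ range (m + 1),
    (m + 2).choose (i + 1) * (m.choose i * (Q 0 (i + 1) i * (Q 0 (m + 1 - i) (m - i) *
      ((i + 1) * (m + 1 - i))))) := by
  have h := rec_raw (Fin (m + 2)) (Fin m) (e := 0) (by omega)
  have he : IsEmpty {x : GT 0 (Fin (m + 2)) (Option (Fin m)) //
      Good 0 x.1.1 x.1.2.1 (fun c => x.1.2.2 (some c))} :=
    ⟨fun x => by have := x.2.2.1; simp at this⟩
  rw [Nat.card_of_isEmpty, zero_add, sum_group (Fin (m + 2)) (Fin m) (fun a b => Q 0 a b *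
        (Q 0 (Fintype.card (Fin (m + 2)) - a) (Fintype.card (Fin m) - b) *
          (a * (Fintype.card (Fin (m + 2)) - a)))),
    N_eq (a := m + 2) (b := m + 1) _ (by simp) (by simp)] at h
  simp only [Fintype.card_fin] at h
  rw [h, sum_range_succ, sum_range_succ']
  simp only [Nat.sub_self, mul_zero, sum_const_zero, add_zero, zero_mul]
  refine sum_congr rfl fun i hi => ?_
  rw [mem_range] at hi
  rw [sum_eq_single i]
  · rw [show m + 2 - (i + 1) = m + 1 - i by omega]
  · intro b _ hb
    rw [Q_zero (a := i + 1) (b := b) (by omega)]; simp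
  · intro hh; exact absurd (mem_range.2 hi) hh

lemma rec1 (m : ℕ) : Q 1 (m + 1) (m + 1) = Q 0 (m + 1) m * (m + 1) + ∑ i ∈ range m,
    (m + 1).choose (i + 1) * (m.choose (i + 1) * (Q 1 (i + 1) (i + 1) *
      (Q 0 (m - i) (m - 1 - i) * ((i + 1) * (m - i))))) := by
  have h := rec_raw (Fin (m + 1)) (Fin m) (e := 1) (by omega)
  rw [first_one _ _ (by simp), sum_group (Fin (m + 1)) (Fin m) (fun a b => Q 1 a b *
        (Q 0 (Fintype.card (Fin (m + 1)) - a) (Fintype.card (Fin m) - b) *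
          (a * (Fintype.card (Fin (m + 1)) - a)))),
    N_eq (a := m + 1) (b := m + 1) _ (by simp) (by simp),
    N_eq (a := m + 1) (b := m) _ (by simp) (by simp)] at h
  simp only [Fintype.card_fin] at h
  rw [h, sum_range_succ, sum_range_succ']
  simp only [Nat.sub_self, mul_zero, sum_const_zero, add_zero, zero_mul]
  congr 1
  refine sum_congr rfl fun i hi => ?_
  rw [mem_range] at hi
  rw [sum_eq_single (i + 1)]
  · rw [show m + 1 - (i + 1) = m - i by omega, show m - (i + 1) = m - 1 - i by omega]
  · intro b _ hb
    rw [Q_zero (a := i + 1) (b := b) (by omega)]; simp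
  · intro hh; exact absurd (mem_range.2 (by omega)) hh

lemma Q_base : Q 0 1 0 = 1 := by
  unfold Q N
  rw [Nat.card_eq_one_iff_unique]
  refine ⟨⟨?_⟩, ⟨⟨(0, id, fun x => x.elim0), rfl, by simp, ?_⟩⟩⟩
  · rintro ⟨⟨r, f, s⟩, g⟩ ⟨⟨r', f', s'⟩, g'⟩
    exact Subtype.ext (Subsingleton.elim _ _)
  · intro U hU _
    obtain ⟨x, hx⟩ := hU
    have : x = 0 := Subsingleton.elim _ _
    subst this
    refine ⟨hx, ?_⟩
    have := card_pos.2 ⟨_, hx⟩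
    simp only [cnt, univ_eq_empty, sum_empty]; omega

open Polynomial in
noncomputable def Ab : ℕ → Polynomial ℚ
  | 0 => 1
  | m + 1 => C (1 / ((m + 1).factorial : ℚ)) * (X * (X + C ((m : ℚ) + 1)) ^ m)

open Polynomial in
lemma Ab_deriv (m : ℕ) : derivative (Ab (m + 1)) = (Ab m).comp (X + C 1) := by
  cases m with
  | zero => simp [Ab]
  | succ m =>
    apply Polynomial.funext
    intro x
    have h : ((m + 1 + 1).factorial : ℚ) = (m + 2) * ((m + 1).factorial : ℚ) := by
      rw [Nat.factorial_succ]; push_cast; ring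
    have h0 : ((m + 1).factorial : ℚ) ≠ 0 := by positivity
    have h1 : ((m : ℚ) + 2) ≠ 0 := by positivity
    simp only [Ab, h, derivative_mul, derivative_C, derivative_X, derivative_pow, eval_add,
      eval_mul, eval_C, eval_X, eval_pow, eval_comp, derivative_add, zero_mul, eval_zero, eval_one,
      Nat.cast_add, Nat.cast_one, add_tsub_cancel_right, eval_natCast]
    field_simp
    ring

open Polynomial in
lemma Ab_conv (m : ℕ) (y : ℚ) :
    ∑ k ∈ range (m + 1), Ab k * C ((Ab (m - k)).eval y) = (Ab m).comp (X + C y) := by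
  induction m with
  | zero => simp [Ab]
  | succ m ih =>
    rw [← sub_eq_zero]
    set P := ∑ k ∈ range (m + 1 + 1), Ab k * C ((Ab (m + 1 - k)).eval y) -
      (Ab (m + 1)).comp (X + C y) with hP
    have hd : derivative P = 0 := by
      rw [hP, sum_range_succ']
      simp only [derivative_sub, derivative_add, derivative_sum, derivative_mul, derivative_C,
        mul_zero, add_zero, Ab_deriv, derivative_comp, derivative_X, mul_one]
      have h2 := congrArg (fun p => Polynomial.comp p (X + C 1)) ih
      simp only [Polynomial.sum_comp, mul_comp, C_comp, comp_assoc] at h2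
      have h3 : derivative (Ab 0) = 0 := by simp [Ab]
      rw [h3]
      simp only [Nat.add_sub_add_right, h2, zero_mul, add_zero, one_mul, comp_assoc]
      rw [sub_eq_zero]
      congr 1
      simp; ring
    have h0 : P.eval 0 = 0 := by
      rw [hP, sum_range_succ']
      have : ∀ k, (Ab (k + 1)).eval 0 = 0 := by intro k; simp [Ab]
      simp [eval_finsetSum, this, Ab]
    have hC := Polynomial.eq_C_of_derivative_eq_zero hd
    rw [hC] at h0 ⊢
    simp at h0
    simp [h0]

lemma Ab_conv_eval (m : ℕ) (x y : ℚ) :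
    ∑ k ∈ range (m + 1), (Ab k).eval x * (Ab (m - k)).eval y = (Ab m).eval (x + y) := by
  have := congrArg (Polynomial.eval x) (Ab_conv m y)
  simpa [Polynomial.eval_finsetSum] using this

/-- normalised counts -/
lemma r_formula (q : ℕ → ℚ) (h0 : q 0 = 1)
    (h : ∀ m : ℕ, (m + 1 : ℚ) * q (m + 1) = (m + 2) * ∑ i ∈ range (m + 1), q i * q (m - i)) (m : ℕ) :
    q m = 2 ^ m * (Ab m).eval 1 := by
  induction m using Nat.strong_induction_on with
  | _ m ih =>
    cases m with
    | zero => simp [h0, Ab]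
    | succ m =>
      have h1 := h m
      have h2 : ∑ i ∈ range (m + 1), q i * q (m - i) = 2 ^ m * (Ab m).eval 2 := by
        rw [show (2 : ℚ) = 1 + 1 by norm_num, ← Ab_conv_eval, mul_sum]
        refine sum_congr rfl fun i hi => ?_
        rw [mem_range] at hi
        rw [ih i (by omega), ih (m - i) (by omega)]
        rw [show ((1 : ℚ) + 1) ^ m = 2 ^ i * 2 ^ (m - i) by
          rw [← pow_add]; congr 1
          · norm_num
          · omega]
        ring
      rw [h2] at h1
      have h3 : (m + 1 : ℚ) ≠ 0 := by positivity
      apply mul_left_cancel₀ h3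
      rw [h1]
      cases m with
      | zero => simp [Ab]
      | succ m =>
        have h : ((m + 1 + 1).factorial : ℚ) = (m + 2) * ((m + 1).factorial : ℚ) := by
          rw [Nat.factorial_succ]; push_cast; ring
        have h0 : ((m + 1).factorial : ℚ) ≠ 0 := by positivity
        have h1 : ((m : ℚ) + 2) ≠ 0 := by positivity
        simp only [Ab, h, Polynomial.eval_mul, Polynomial.eval_C, Polynomial.eval_X,
          Polynomial.eval_add, Polynomial.eval_pow]
        push_cast
        field_simp
        ring

lemma phi_formula (q p : ℕ → ℚ) (hq : ∀ m, q m = 2 ^ m * (Ab m).eval 1)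
    (h : ∀ m, p m = q m + ∑ i ∈ range m, p i * q (m - 1 - i)) (m : ℕ) :
    p m = ∑ j ∈ range (m + 1), 2 ^ (m - j) * (Ab (m - j)).eval ((j : ℚ) + 1) := by
  induction m using Nat.strong_induction_on with
  | _ m ih =>
    rw [h, sum_range_succ', hq m]
    simp only [Nat.sub_zero, Nat.cast_zero, zero_add]
    rw [add_comm]
    congr 1
    cases m with
    | zero => simp
    | succ m =>
    have h1 : ∀ i ∈ range (m + 1), p i * q (m + 1 - 1 - i) =
        ∑ j ∈ range (i + 1), 2 ^ (m - j) * ((Ab (i - j)).eval ((j : ℚ) + 1) *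
          (Ab (m - i)).eval 1) := by
      intro i hi
      rw [mem_range] at hi
      rw [ih i hi, hq, sum_mul]
      refine sum_congr rfl fun j hj => ?_
      rw [mem_range] at hj
      rw [show m + 1 - 1 - i = m - i by omega, show m - j = (i - j) + (m - i) by omega, pow_add]
      ring
    rw [sum_congr rfl h1]
    rw [sum_sigma' , sum_bij' (t := (range (m + 1)).sigma fun j => range (m - j + 1))
      (g := fun x => 2 ^ (m - x.1) * ((Ab x.2).eval ((x.1 : ℚ) + 1) *
          (Ab (m - x.1 - x.2)).eval 1))
      (fun x _ => ⟨x.2, x.1 - x.2⟩) (fun x _ => ⟨x.1 + x.2, x.1⟩)]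
    · rw [← sum_sigma' (range (m + 1)) (fun j => range (m - j + 1))
        (fun j k => (2 : ℚ) ^ (m - j) * ((Ab k).eval ((j : ℚ) + 1) *
          (Ab (m - j - k)).eval 1))]
      refine sum_congr rfl fun j hj => ?_
      rw [← mul_sum, Ab_conv_eval]
      simp
    · rintro ⟨a, b⟩ hx; simp at hx ⊢; omega
    · rintro ⟨a, b⟩ hx; simp at hx ⊢; omega
    · rintro ⟨a, b⟩ hx; simp at hx ⊢; omega
    · rintro ⟨a, b⟩ hx; simp at hx ⊢
    · rintro ⟨a, b⟩ hx; simp at hx ⊢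
      rw [show m - b - (a - b) = m - a by omega]
      exact Or.inl rfl

noncomputable def lc {n : ℕ} (L : List (Fin n)) (U : Finset (Fin n)) : ℕ :=
  (L.map (fun x => if x ∈ U then 1 else 0)).sum

lemma orbit_cl {n : ℕ} (f : Fin n → Fin n) (v : Fin n) :
    Cl f ((range n).image fun i => f^[i] v) := by
  have key : ∃ k < n, f^[k] v = f^[n] v := by
    obtain ⟨i, hi, j, hj, hij, h⟩ := exists_ne_map_eq_of_card_lt_of_maps_to
      (s := range (n + 1)) (t := (univ : Finset (Fin n))) (by simp)
      (f := fun i => f^[i] v) (by intro x _; simp)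
    simp only [mem_range] at hi hj
    wlog hlt : i < j generalizing i j
    · exact this j i hij.symm h.symm hj hi (by omega)
    refine ⟨n - j + i, by omega, ?_⟩
    rw [Function.iterate_add_apply, h, ← Function.iterate_add_apply]
    congr 2; omega
  intro x hx
  simp only [mem_image, mem_range] at hx ⊢
  obtain ⟨i, hi, rfl⟩ := hx
  by_cases h : i + 1 < n
  · exact ⟨i + 1, h, by rw [Function.iterate_succ_apply']⟩
  · obtain ⟨k, hk, h2⟩ := key
    refine ⟨k, hk, ?_⟩
    rw [h2, ← Function.iterate_succ_apply' f]
    congr 2; omega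

lemma park_iff {n : ℕ} (f : Fin n → Fin n) (L : List (Fin n)) : ∀ occ : List (Fin n),
    (parkAux n f occ L).isSome ↔ ∀ U : Finset (Fin n), Cl f U →
      lc L U ≤ (U.filter (· ∉ occ)).card := by
  induction L with
  | nil => intro occ; simp [parkAux, lc]
  | cons v L ih =>
    intro occ
    have hlc : ∀ U, lc (v :: L) U = (if v ∈ U then 1 else 0) + lc L U := by
      intro U; simp [lc]
    rw [parkAux]
    cases hf : (List.range n).find? (fun i => decide (f^[i] v ∉ occ)) with
    | none =>
      simp only [Option.isSome_none, Bool.false_eq_true, false_iff]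
      intro h
      rw [List.find?_eq_none] at hf
      have h1 := h _ (orbit_cl f v)
      have hn : 0 < n := v.pos
      have hv0 : v ∈ (range n).image fun i => f^[i] v :=
        mem_image.2 ⟨0, by simpa using hn, rfl⟩
      rw [hlc, if_pos hv0] at h1
      have h2 : ((range n).image fun i => f^[i] v).filter (· ∉ occ) = ∅ := by
        rw [filter_eq_empty_iff]
        intro x hx
        simp only [mem_image, mem_range] at hx
        obtain ⟨i, hi, rfl⟩ := hx
        have := hf i (by simpa using hi)
        simpa using this
      rw [h2] at h1
      simp at h1
    | some i =>
      rw [List.find?_range_eq_some] at hf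
      obtain ⟨hp, hin, hlt⟩ := hf
      simp only [decide_eq_true_eq] at hp
      have hlt' : ∀ j < i, f^[j] v ∈ occ := by
        intro j hj; simpa using hlt j hj
      set p := f^[i] v with hpdef
      dsimp only
      rw [ih, ← hpdef]
      have hin' : ∀ U : Finset (Fin n), p ∈ U →
          (U.filter (· ∉ occ)).card = (U.filter (· ∉ p :: occ)).card + 1 := by
        intro U hU
        have : U.filter (· ∉ p :: occ) = (U.filter (· ∉ occ)).erase p := by
          ext x; simp; tauto
        rw [this, card_erase_add_one]
        simp [hU, hp]
      have hout : ∀ U : Finset (Fin n), p ∉ U →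
          (U.filter (· ∉ occ)).card = (U.filter (· ∉ p :: occ)).card := by
        intro U hU
        congr 1
        ext x; simp
        intro hx _ hxp; exact hU (hxp ▸ hx)
      constructor
      · intro h U hU
        have h1 := h U hU
        rw [hlc]
        by_cases hv : v ∈ U
        · have : p ∈ U := mem_of_cl hU hv i
          rw [hin' U this, if_pos hv]; omega
        · simp only [hv, if_false]
          by_cases hpU : p ∈ U
          · rw [hin' U hpU]; omega
          · rw [hout U hpU]; omega
      · intro h U hU
        by_cases hpU : p ∈ U
        · have hU' : Cl f (U ∪ (range i).image fun j => f^[j] v) := by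
            intro x hx
            simp only [mem_union, mem_image, mem_range] at hx ⊢
            rcases hx with hx | ⟨j, hj, rfl⟩
            · exact Or.inl (hU x hx)
            · by_cases hji : j + 1 < i
              · right; exact ⟨j + 1, hji, by rw [Function.iterate_succ_apply']⟩
              · left
                rw [← Function.iterate_succ_apply' f, show j.succ = i by omega]
                exact hpU
          have h1 := h _ hU'
          have hvU : v ∈ U ∪ (range i).image fun j => f^[j] v := by
            by_cases hi0 : i = 0
            · subst hi0; exact mem_union_left _ hpU
            · exact mem_union_right _ (mem_image.2 ⟨0, by simp; omega, rfl⟩)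
          rw [hlc, if_pos hvU] at h1
          have h2 : (U ∪ (range i).image fun j => f^[j] v).filter (· ∉ occ) =
              U.filter (· ∉ occ) := by
            ext x
            simp only [mem_filter, mem_union, mem_image, mem_range]
            constructor
            · rintro ⟨hx | ⟨j, hj, rfl⟩, hx2⟩
              · exact ⟨hx, hx2⟩
              · exact absurd (hlt' j hj) hx2
            · rintro ⟨hx, hx2⟩; exact ⟨Or.inl hx, hx2⟩
          rw [h2, hin' U hpU] at h1
          have h3 : lc L U ≤ lc L (U ∪ (range i).image fun j => f^[j] v) := by
            unfold lc
            apply List.sum_le_sum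
            intro x _
            by_cases hx : x ∈ U
            · simp [hx]
            · simp [hx]
          omega
        · rw [← hout U hpU]
          have := h U hU
          rw [hlc] at this
          omega

lemma FCount_eq (n : ℕ) : FCount n n = Q 1 n n := by
  have key : ∀ (T : LabelledRootedTree n) (s : Fin n → Fin n),
      IsTreeParking T s ↔ Good 1 T.root T.parent s := by
    intro T s
    have hlc : ∀ U, lc (List.ofFn s) U = cnt s U := by
      intro U; simp only [lc, cnt, List.map_ofFn, List.sum_ofFn, Function.comp]
      refine sum_congr rfl fun c _ => ?_
      by_cases hc : s c ∈ U
      · rw [if_pos hc, if_pos hc]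
      · rw [if_neg hc, if_neg hc]
    have hr : ∀ U : Finset (Fin n), U.Nonempty → Cl T.parent U → T.root ∈ U := by
      rintro U ⟨x, hx⟩ hU
      obtain ⟨k, hk⟩ := T.reaches_root x
      rw [← hk]; exact mem_of_cl hU hx k
    unfold IsTreeParking ParkingSucceeds Good
    rw [park_iff]
    simp only [hlc, List.not_mem_nil, not_false_eq_true, filter_true]
    constructor
    · intro h
      exact ⟨T.parent_root, trivial, fun U hU hc => ⟨hr U hU hc, by have := h U hc; omega⟩⟩
    · intro h U hc
      by_cases hU : U.Nonempty
      · have := (h.2.2 U hU hc).2; omega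
      · rw [not_nonempty_iff_eq_empty.1 hU]; simp [cnt]
  unfold FCount Q N
  refine Nat.card_eq_of_bijective
    (fun p => (⟨(p.1.1.root, p.1.1.parent, p.1.2), (key _ _).1 p.2⟩ : GT 1 (Fin n) (Fin n)))
    ⟨?_, ?_⟩
  · rintro ⟨⟨⟨r, f, h1, h2⟩, s⟩, h⟩ ⟨⟨⟨r', f', h1', h2'⟩, s'⟩, h'⟩ hh
    have hh := congrArg (fun y => y.1) hh
    simp only [Prod.mk.injEq] at hh
    obtain ⟨rfl, rfl, rfl⟩ := hh
    rfl
  · rintro ⟨⟨r, f, s⟩, h⟩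
    have hreach : ∀ v : Fin n, ∃ k : ℕ, f^[k] v = r := by
      intro v
      have := (h.2.2 _ ⟨v, mem_image.2 ⟨0, by simpa using v.pos, rfl⟩⟩ (orbit_cl f v)).1
      simp only [mem_image] at this
      obtain ⟨k, _, hk⟩ := this
      exact ⟨k, hk⟩
    exact ⟨⟨(⟨r, f, h.1, hreach⟩, s), (key ⟨r, f, h.1, hreach⟩ s).2 h⟩, rfl⟩

noncomputable def qq (m : ℕ) : ℚ := (Q 0 (m + 1) m : ℚ) / ((m.factorial : ℚ) ^ 2)
noncomputable def pp (m : ℕ) : ℚ :=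
  (Q 1 (m + 1) (m + 1) : ℚ) / (((m + 1).factorial : ℚ) * (m.factorial : ℚ))

lemma qq_rec (m : ℕ) :
    (m + 1 : ℚ) * qq (m + 1) = (m + 2) * ∑ i ∈ range (m + 1), qq i * qq (m - i) := by
  have h : (Q 0 (m + 2) (m + 1) : ℚ) =
      ∑ i ∈ range (m + 1), ((m + 2).factorial * m.factorial : ℚ) * (qq i * qq (m - i)) := by
    rw [rec0]; push_cast
    refine sum_congr rfl fun i hi => ?_
    rw [mem_range] at hi
    obtain ⟨k, rfl⟩ : ∃ k, m = i + k := ⟨m - i, by omega⟩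
    rw [show i + k + 1 - i = k + 1 by omega, show i + k - i = k by omega]
    rw [show i + k + 2 = (i + 1) + (k + 1) by ring, Nat.cast_add_choose, Nat.cast_add_choose]
    unfold qq
    rw [Nat.factorial_succ i, Nat.factorial_succ k]
    push_cast
    have h1 : (i.factorial : ℚ) ≠ 0 := by positivity
    have h2 : (k.factorial : ℚ) ≠ 0 := by positivity
    field_simp
  rw [← mul_sum] at h
  have hq : qq (m + 1) = (Q 0 (m + 2) (m + 1) : ℚ) / (((m + 1).factorial : ℚ) ^ 2) := rfl
  rw [hq, h, Nat.factorial_succ (m + 1), Nat.factorial_succ m]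
  push_cast
  have h1 : (m.factorial : ℚ) ≠ 0 := by positivity
  field_simp
  ring

lemma pp_rec (m : ℕ) : pp m = qq m + ∑ i ∈ range m, pp i * qq (m - 1 - i) := by
  have h : (Q 1 (m + 1) (m + 1) : ℚ) = ((m + 1).factorial * m.factorial : ℚ) * qq m +
      ∑ i ∈ range m, ((m + 1).factorial * m.factorial : ℚ) * (pp i * qq (m - 1 - i)) := by
    rw [rec1]; push_cast
    congr 1
    · unfold qq
      rw [Nat.factorial_succ m]; push_cast
      have h1 : (m.factorial : ℚ) ≠ 0 := by positivity
      field_simp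
    refine sum_congr rfl fun i hi => ?_
    rw [mem_range] at hi
    obtain ⟨k, rfl⟩ : ∃ k, m = i + 1 + k := ⟨m - 1 - i, by omega⟩
    rw [show i + 1 + k - i = k + 1 by omega, show i + 1 + k - 1 - i = k by omega]
    rw [show i + 1 + k + 1 = (i + 1) + (k + 1) by ring, Nat.cast_add_choose, Nat.cast_add_choose]
    unfold qq pp
    rw [Nat.factorial_succ i, Nat.factorial_succ k]
    push_cast
    have h1 : (i.factorial : ℚ) ≠ 0 := by positivity
    have h2 : (k.factorial : ℚ) ≠ 0 := by positivity
    field_simp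
  rw [← mul_sum, ← mul_add] at h
  unfold pp at h ⊢
  rw [h]
  have h1 : (m.factorial : ℚ) ≠ 0 := by positivity
  have h2 : ((m + 1).factorial : ℚ) ≠ 0 := by positivity
  field_simp

lemma Ab_eval (m : ℕ) (i : ℕ) (hi : i ≤ m) : (Ab i).eval (((m - i : ℕ) : ℚ) + 1) =
    ((m : ℚ) + 1 - i) * (m + 1) ^ i / ((m + 1) * i.factorial) := by
  have h3 : (m : ℚ) + 1 ≠ 0 := by positivity
  rw [Nat.cast_sub hi]
  cases i with
  | zero => simp [Ab, h3]
  | succ i =>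
    have h2 : ((i + 1).factorial : ℚ) ≠ 0 := by positivity
    simp only [Ab, Polynomial.eval_mul, Polynomial.eval_C, Polynomial.eval_X,
          Polynomial.eval_add, Polynomial.eval_pow]
    push_cast
    rw [show (m : ℚ) - (i + 1) + 1 + (i + 1) = m + 1 by ring]
    field_simp
    ring

lemma final (m : ℕ) : (FCount (m + 1) (m + 1) : ℚ) = (m.factorial : ℚ) ^ 2 *
    ∑ j ∈ range (m + 1), (((m + 1 : ℕ) : ℚ) - (j : ℚ)) * (2 * ((m + 1 : ℕ) : ℚ)) ^ j /
      (Nat.factorial j : ℚ) := by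
  have hq : ∀ m, qq m = 2 ^ m * (Ab m).eval 1 :=
    r_formula qq (by simp [qq, Q_base]) qq_rec
  have hp := phi_formula qq pp hq pp_rec m
  rw [← sum_range_reflect] at hp
  rw [FCount_eq]
  have h1 : (m.factorial : ℚ) ≠ 0 := by positivity
  have h2 : ((m + 1).factorial : ℚ) ≠ 0 := by positivity
  have h3 : (Q 1 (m + 1) (m + 1) : ℚ) = ((m + 1).factorial * m.factorial : ℚ) * pp m := by
    unfold pp; field_simp
  rw [h3, hp, mul_sum, mul_sum]
  refine sum_congr rfl fun i hi => ?_
  rw [mem_range] at hi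
  rw [show m + 1 - 1 - i = m - i by omega, show m - (m - i) = i by omega, Ab_eval m i (by omega),
    Nat.factorial_succ m, mul_pow]
  push_cast
  have h4 : (i.factorial : ℚ) ≠ 0 := by positivity
  have h5 : (m : ℚ) + 1 ≠ 0 := by positivity
  field_simp

end LP

/-- (Lackner–Panholzer, Corollary 3.4) For every `n ≥ 1`,
`F_n = ((n-1)!)^2 Σ_{j=0}^{n-1} (n-j)(2n)^j / j!`. -/
theorem lackner_panholzer_corollary_3_4 (n : ℕ) (hn : 1 ≤ n) :
    (FCount n n : ℚ) =
      ((Nat.factorial (n - 1) : ℚ)) ^ 2 *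
        ∑ j ∈ Finset.range n, ((n : ℚ) - (j : ℚ)) * (2 * (n : ℚ)) ^ j / (Nat.factorial j : ℚ) := by
  obtain ⟨m, rfl⟩ : ∃ m, n = m + 1 := ⟨n - 1, by omega⟩
  exact LP.final m
end

section
/- (Lackner–Panholzer, Theorem 4.4) For all n ≥ 1 and all 0 ≤ m ≤ n, the total number M_{n,m} of (n,m)-mapping parking functions and the total number F_{n,m} of (n,m)-tree parking functions satisfy M_{n,m} = n · F_{n,m}. -/
section Reach
variable {V : Type*}

def Rch (f : V → V) (x y : V) : Prop := ∃ k : ℕ, f^[k] x = y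

lemma Rch.refl (f : V → V) (x : V) : Rch f x x := ⟨0, rfl⟩

lemma Rch.trans {f : V → V} {x y z : V} (h1 : Rch f x y) (h2 : Rch f y z) : Rch f x z := by
  obtain ⟨a, rfl⟩ := h1
  obtain ⟨b, rfl⟩ := h2
  exact ⟨b + a, Function.iterate_add_apply f b a x⟩

lemma Rch.step (f : V → V) (x : V) : Rch f x (f x) := ⟨1, rfl⟩

lemma Rch.to_fixed {f : V → V} {x y z : V} (h1 : Rch f x y) (h2 : Rch f x z) (hz : f z = z) :
    Rch f y z := by
  obtain ⟨a, rfl⟩ := h1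
  obtain ⟨b, hb⟩ := h2
  refine ⟨b, ?_⟩
  rw [← Function.iterate_add_apply, Nat.add_comm, Function.iterate_add_apply, hb,
    Function.iterate_fixed hz]

lemma Rch.eq_of_fixed {f : V → V} {x y : V} (h1 : Rch f x y) (hx : f x = x) : x = y := by
  obtain ⟨a, rfl⟩ := h1
  rw [Function.iterate_fixed hx]

/-- Transfer of a path to a fixed vertex. -/
lemma Rch.transfer {f h : V → V} {U : Set V} {w u : V} (hr : Rch f w u)
    (hU : ∀ x ∈ U, f x = x) (hh : ∀ x, x ∉ U → h x = f x) : Rch h w u := by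
  obtain ⟨k, hk⟩ := hr
  induction k generalizing w with
  | zero => exact ⟨0, hk⟩
  | succ k ih =>
    by_cases hw : w ∈ U
    · rw [Function.iterate_fixed (hU w hw)] at hk
      exact ⟨0, hk⟩
    · rw [Function.iterate_succ_apply] at hk
      have := ih hk
      rw [← hh w hw] at this
      exact (Rch.step h w).trans this

lemma Rch.congr_of_not [DecidableEq V] {f : V → V} {x u : V} (w : V) (hx : ¬ Rch f x u) (y : V) :
    Rch (Function.update f u w) x y ↔ Rch f x y := by
  have key : ∀ k, (Function.update f u w)^[k] x = f^[k] x := by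
    intro k
    induction k with
    | zero => rfl
    | succ k ih =>
      rw [Function.iterate_succ_apply', Function.iterate_succ_apply', ih,
        Function.update_of_ne]
      intro h
      exact hx ⟨k, h⟩
  simp only [Rch, key]

lemma Rch.periodic {h : V → V} {u w ρ : V} (h1 : h u = w) (h2 : Rch h w u) (h3 : Rch h u ρ)
    (hρ : h ρ = ρ) : u = ρ := by
  obtain ⟨a, ha⟩ := h2
  obtain ⟨b, hb⟩ := h3
  have hp : h^[a+1] u = u := by rw [Function.iterate_succ_apply, h1, ha]
  have e1 : h^[(a+1)*b] u = u := by
    rw [Function.iterate_mul]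
    exact Function.iterate_fixed hp b
  have e2 : h^[(a+1)*b] u = ρ := by
    have : (a+1)*b = a*b + b := by ring
    rw [this, Function.iterate_add_apply, hb, Function.iterate_fixed hρ]
  exact e1.symm.trans e2

open Classical in
lemma forest_count [Fintype V] (ρ : V) (U : Finset V) : ∀ (f : V → V), f ρ = ρ → ρ ∉ U →
    (∀ u ∈ U, f u = u) → (∀ x, ∃ y, y ∈ insert ρ U ∧ Rch f x y) →
    Fintype.card V * (Finset.univ.filter
      (fun h : V → V => (∀ x, x ∉ U → h x = f x) ∧ ∀ x, Rch h x ρ)).card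
      = (Finset.univ.filter (fun x => Rch f x ρ)).card * Fintype.card V ^ U.card := by
  induction U using Finset.induction_on with
  | empty =>
    intro f hf _ _ hr
    have h1 : (Finset.univ.filter (fun x => Rch f x ρ)) = Finset.univ := by
      ext x
      simpa using hr x
    have h2 : (Finset.univ.filter
      (fun h : V → V => (∀ x, x ∉ (∅ : Finset V) → h x = f x) ∧ ∀ x, Rch h x ρ)) = {f} := by
      ext h
      simp only [Finset.mem_filter, Finset.mem_univ, true_and, Finset.mem_singleton]
      constructor
      · rintro ⟨h, -⟩
        funext x
        exact h x (by simp)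
      · rintro rfl
        exact ⟨fun _ _ => rfl, fun x => by simpa using hr x⟩
    rw [h1, h2]
    simp
  | insert u U hu ih =>
    intro f hf hρ hfix hr
    have hρu : ρ ≠ u := by rintro rfl; simp at hρ
    have hρU : ρ ∉ U := fun h => hρ (Finset.mem_insert_of_mem h)
    have hfu : f u = u := hfix u (by simp)
    set A := Finset.univ.filter (fun h : V → V => (∀ x, x ∉ insert u U → h x = f x) ∧
      ∀ x, Rch h x ρ) with hA
    set Cρ := Finset.univ.filter (fun x => Rch f x ρ) with hCρ
    set Cu := Finset.univ.filter (fun x => Rch f x u) with hCu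
    have hdisj : Disjoint Cρ Cu := by
      rw [Finset.disjoint_left]
      intro x hx hx'
      simp only [hCρ, hCu, Finset.mem_filter, Finset.mem_univ, true_and] at hx hx'
      exact hρu ((hx'.to_fixed hx hf).eq_of_fixed hfu).symm
    have hsplit : A.card = ∑ w : V, (A.filter (fun h => h u = w)).card :=
      Finset.card_eq_sum_card_fiberwise (fun _ _ => Finset.mem_coe.2 (Finset.mem_univ _))
    have hterm : ∀ w : V, Fintype.card V * (A.filter (fun h => h u = w)).card =
        (if w ∈ Cu then 0 else if w ∈ Cρ then (Cρ.card + Cu.card) else Cρ.card)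
          * Fintype.card V ^ U.card := by
      intro w
      by_cases hw : w ∈ Cu
      · simp only [hw, if_true, zero_mul, mul_eq_zero, Finset.card_eq_zero]
        right
        rw [Finset.filter_eq_empty_iff]
        intro h hh hhu
        simp only [hA, Finset.mem_filter, Finset.mem_univ, true_and] at hh
        simp only [hCu, Finset.mem_filter, Finset.mem_univ, true_and] at hw
        have h2 : Rch h w u := Rch.transfer (U := ((insert u U : Finset V) : Set V)) hw
          (fun x hx => hfix x (by simpa using hx)) (fun x hx => hh.1 x (by simpa using hx))
        exact hρu (Rch.periodic hhu h2 (hh.2 u) (by rw [hh.1 ρ hρ, hf])).symm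
      · have hw' : ¬ Rch f w u := by simpa [hCu] using hw
        have hfw : ∀ x, Rch f x u → Rch (Function.update f u w) x u := by
          intro x hx
          refine Rch.transfer (U := {u}) hx ?_ ?_
          · rintro x rfl; exact hfu
          · intro x hx
            exact Function.update_of_ne hx _ _
        have hfw' : ∀ x, Rch f x u → Rch (Function.update f u w) x w := by
          intro x hx
          have := Rch.step (Function.update f u w) u
          rw [Function.update_self] at this
          exact (hfw x hx).trans this
        have hρ' : Function.update f u w ρ = ρ := by rw [Function.update_of_ne hρu, hf]
        have hI := ih (Function.update f u w) hρ' hρU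
          (by
            intro v hv
            rw [Function.update_of_ne (by rintro rfl; exact hu hv)]
            exact hfix v (Finset.mem_insert_of_mem hv))
          (by
            have aux : ∀ x, ¬ Rch f x u → ∃ y, y ∈ insert ρ U ∧ Rch (Function.update f u w) x y := by
              intro x hx
              obtain ⟨y, hy, hxy⟩ := hr x
              refine ⟨y, ?_, (Rch.congr_of_not w hx y).2 hxy⟩
              simp only [Finset.mem_insert] at hy ⊢
              rcases hy with h | h | h
              · exact Or.inl h
              · subst h; exact absurd hxy hx
              · exact Or.inr h
            intro x
            by_cases hx : Rch f x u
            · obtain ⟨y, hy, hwy⟩ := aux w hw'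
              exact ⟨y, hy, (hfw' x hx).trans hwy⟩
            · exact aux x hx)
        have e1 : A.filter (fun h => h u = w) = Finset.univ.filter
            (fun h : V → V => (∀ x, x ∉ U → h x = Function.update f u w x) ∧ ∀ x, Rch h x ρ) := by
          ext h
          simp only [hA, Finset.mem_filter, Finset.mem_univ, true_and]
          constructor
          · rintro ⟨⟨h1, h2⟩, h3⟩
            refine ⟨fun x hx => ?_, h2⟩
            by_cases hxu : x = u
            · subst hxu; rw [Function.update_self, h3]
            · rw [Function.update_of_ne hxu]
              exact h1 x (by simp [hxu, hx])
          · rintro ⟨h1, h2⟩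
            refine ⟨⟨fun x hx => ?_, h2⟩, ?_⟩
            · simp only [Finset.mem_insert, not_or] at hx
              rw [h1 x hx.2, Function.update_of_ne hx.1]
            · rw [h1 u hu, Function.update_self]
        rw [e1, hI]
        congr 1
        rw [if_neg hw]
        have hwr : w ∈ Cρ ↔ Rch f w ρ := by simp [hCρ]
        by_cases hwρ : Rch f w ρ
        · rw [if_pos (hwr.2 hwρ), ← Finset.card_union_of_disjoint hdisj]
          congr 1
          ext x
          simp only [hCρ, hCu, Finset.mem_filter, Finset.mem_univ, true_and, Finset.mem_union]
          by_cases hx : Rch f x u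
          · simp only [hx, or_true, iff_true]
            exact (hfw' x hx).trans ((Rch.congr_of_not w hw' ρ).2 hwρ)
          · simp only [hx, or_false]
            exact Rch.congr_of_not w hx ρ
        · rw [if_neg (fun h => hwρ (hwr.1 h))]
          congr 1
          ext x
          simp only [hCρ, Finset.mem_filter, Finset.mem_univ, true_and]
          by_cases hx : Rch f x u
          · constructor
            · intro h
              exact absurd ((Rch.congr_of_not w hw' ρ).1 ((hfw' x hx).to_fixed h hρ')) hwρ
            · intro h
              exact absurd ((hx.to_fixed h hf).eq_of_fixed hfu).symm hρu
          · exact Rch.congr_of_not w hx ρ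
    have hsum : ∑ w : V, (if w ∈ Cu then 0 else if w ∈ Cρ then (Cρ.card + Cu.card) else Cρ.card)
        = Cρ.card * Fintype.card V := by
      have hh : ∀ w : V, (if w ∈ Cu then 0 else if w ∈ Cρ then (Cρ.card + Cu.card) else Cρ.card)
          + (if w ∈ Cu then Cρ.card else 0) = Cρ.card + (if w ∈ Cρ then Cu.card else 0) := by
        intro w
        by_cases h1 : w ∈ Cu
        · have h2 : w ∉ Cρ := fun h => (Finset.disjoint_left.1 hdisj h h1)
          simp [h1, h2]
        · by_cases h2 : w ∈ Cρ <;> simp [h1, h2]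
      have := Finset.sum_congr (rfl : (Finset.univ : Finset V) = Finset.univ) (fun w _ => hh w)
      rw [Finset.sum_add_distrib, Finset.sum_add_distrib] at this
      simp only [Finset.sum_ite_mem, Finset.univ_inter, Finset.sum_const, smul_eq_mul,
        Finset.card_univ] at this
      nlinarith [this]
    rw [hsplit, Finset.mul_sum, Finset.sum_congr rfl (fun w _ => hterm w), ← Finset.sum_mul, hsum,
      Finset.card_insert_of_notMem hu, pow_succ]
    ring

def IsTreeMap (f : V → V) : Prop := ∃ ρ, f ρ = ρ ∧ ∀ x, Rch f x ρ

open Classical in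
lemma tree_count [Fintype V] [Nonempty V] (W : Finset V) (g : V → V)
    (hg : ∀ x, ∃ y, y ∉ W ∧ Rch g x y) :
    Fintype.card V * (Finset.univ.filter
      (fun h : V → V => (∀ x ∈ W, h x = g x) ∧ IsTreeMap h)).card
      = (Finset.univ.filter (fun h : V → V => (∀ x ∈ W, h x = g x))).card := by
  set f : V → V := fun x => if x ∈ W then g x else x with hf
  have hfW : ∀ x ∈ W, f x = g x := fun x hx => by simp [hf, hx]
  have hfn : ∀ x, x ∉ W → f x = x := fun x hx => by simp [hf, hx]
  have hfr : ∀ x, ∃ y, y ∉ W ∧ Rch f x y := by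
    intro x
    obtain ⟨y, hy, k, hk⟩ := hg x
    induction k generalizing x with
    | zero => exact ⟨y, hy, 0, hk⟩
    | succ k ih =>
      by_cases hx : x ∈ W
      · rw [Function.iterate_succ_apply, ← hfW x hx] at hk
        obtain ⟨z, hz, hz'⟩ := ih _ hk
        exact ⟨z, hz, (Rch.step f x).trans hz'⟩
      · exact ⟨x, hx, Rch.refl f x⟩
  have htot : (Finset.univ.filter (fun h : V → V => (∀ x ∈ W, h x = g x))).card
      = Fintype.card V ^ (Wᶜ).card := by
    have : (Finset.univ.filter (fun h : V → V => (∀ x ∈ W, h x = g x)))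
        = Fintype.piFinset (fun x => if x ∈ W then {g x} else Finset.univ) := by
      ext h
      simp only [Finset.mem_filter, Finset.mem_univ, true_and, Fintype.mem_piFinset]
      refine forall_congr' fun x => ?_
      by_cases hx : x ∈ W <;> simp [hx]
    rw [this, Fintype.card_piFinset]
    have h2 : ∀ x, (if x ∈ W then ({g x} : Finset V) else Finset.univ).card
        = if x ∈ Wᶜ then Fintype.card V else 1 := by
      intro x
      by_cases hx : x ∈ W <;> simp [hx]
    simp only [h2, Finset.prod_ite_mem, Finset.univ_inter, Finset.prod_const]
  have hB : Finset.univ.filter (fun h : V → V => (∀ x ∈ W, h x = g x) ∧ IsTreeMap h)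
      = (Wᶜ).biUnion (fun ρ => Finset.univ.filter (fun h : V → V =>
        (∀ x, x ∉ (Wᶜ).erase ρ → h x = f x) ∧ ∀ x, Rch h x ρ)) := by
    ext h
    simp only [Finset.mem_filter, Finset.mem_univ, true_and, Finset.mem_biUnion,
      Finset.mem_compl, Finset.mem_erase]
    constructor
    · rintro ⟨h1, ρ, h2, h3⟩
      have hρ : ρ ∉ W := by
        intro hρ
        obtain ⟨y, hy, hy'⟩ := hfr ρ
        have : f ρ = ρ := by rw [hfW ρ hρ, ← h1 ρ hρ, h2]
        rw [← hy'.eq_of_fixed this] at hy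
        exact hy hρ
      refine ⟨ρ, hρ, fun x hx => ?_, h3⟩
      by_cases hxW : x ∈ W
      · rw [hfW x hxW, h1 x hxW]
      · have : x = ρ := by by_contra hne; exact hx ⟨hne, hxW⟩
        subst this
        rw [hfn x hxW, h2]
    · rintro ⟨ρ, hρ, h1, h2⟩
      refine ⟨fun x hx => ?_, ρ, ?_, h2⟩
      · rw [h1 x (fun h => h.2 hx), hfW x hx]
      · rw [h1 ρ (fun h => h.1 rfl), hfn ρ hρ]
  have hBc : (Finset.univ.filter (fun h : V → V => (∀ x ∈ W, h x = g x) ∧ IsTreeMap h)).card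
      = ∑ ρ ∈ Wᶜ, (Finset.univ.filter (fun h : V → V =>
        (∀ x, x ∉ (Wᶜ).erase ρ → h x = f x) ∧ ∀ x, Rch h x ρ)).card := by
    rw [hB, Finset.card_biUnion]
    intro ρ hρ σ hσ hne
    rw [Function.onFun, Finset.disjoint_left]
    intro h h1 h2
    simp only [Finset.mem_filter, Finset.mem_univ, true_and, Finset.mem_compl, Finset.mem_coe] at h1 h2 hρ hσ
    have : h ρ = ρ := by rw [h1.1 ρ (by simp), hfn ρ hρ]
    exact hne ((h2.2 ρ).eq_of_fixed this)
  have hterm : ∀ ρ ∈ Wᶜ, Fintype.card V * (Finset.univ.filter (fun h : V → V =>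
        (∀ x, x ∉ (Wᶜ).erase ρ → h x = f x) ∧ ∀ x, Rch h x ρ)).card =
        (Finset.univ.filter (fun x => Rch f x ρ)).card * Fintype.card V ^ ((Wᶜ).card - 1) := by
    intro ρ hρ
    rw [← Finset.card_erase_of_mem hρ]
    refine forest_count ρ _ f (hfn ρ (by simpa using hρ)) (by simp) ?_ ?_
    · intro u hu
      exact hfn u (by simpa using (Finset.mem_erase.1 hu).2)
    · intro x
      obtain ⟨y, hy, hy'⟩ := hfr x
      refine ⟨y, ?_, hy'⟩
      rw [Finset.insert_erase hρ]
      simpa using hy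
  have hpart : ∑ ρ ∈ Wᶜ, (Finset.univ.filter (fun x => Rch f x ρ)).card = Fintype.card V := by
    rw [← Finset.card_biUnion, ← Finset.card_univ]
    · congr 1
      ext x
      simp only [Finset.mem_biUnion, Finset.mem_filter, Finset.mem_univ, true_and,
        Finset.mem_compl, iff_true]
      exact hfr x
    · intro ρ hρ σ hσ hne
      rw [Function.onFun, Finset.disjoint_left]
      intro x h1 h2
      simp only [Finset.mem_filter, Finset.mem_univ, true_and, Finset.mem_compl, Finset.mem_coe] at h1 h2 hρ hσ
      exact hne ((h1.to_fixed h2 (hfn σ hσ)).eq_of_fixed (hfn ρ hρ))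
  have hpos : 1 ≤ (Wᶜ).card := by
    obtain ⟨y, hy, -⟩ := hg (Classical.arbitrary V)
    exact Finset.card_pos.2 ⟨y, by simpa using hy⟩
  rw [hBc, Finset.mul_sum, Finset.sum_congr rfl hterm, ← Finset.sum_mul, hpart, htot,
    ← pow_succ', Nat.sub_add_cancel hpos]

end Reach

/-- vertices whose outgoing edge is used -/
def usedAux (n : ℕ) (f : Fin n → Fin n) : List (Fin n) → List (Fin n) → Finset (Fin n)
  | _, [] => ∅
  | occ, v :: rest =>
    match (List.range n).find? (fun i => decide (f^[i] v ∉ occ)) with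
    | none => ∅
    | some i => (Finset.range i).image (fun j => f^[j] v) ∪ usedAux n f (f^[i] v :: occ) rest

lemma find_iff {n : ℕ} (f : Fin n → Fin n) (occ : List (Fin n)) (v : Fin n) (i : ℕ) :
    (List.range n).find? (fun i => decide (f^[i] v ∉ occ)) = some i ↔
      i < n ∧ f^[i] v ∉ occ ∧ ∀ j < i, f^[j] v ∈ occ := by
  rw [List.find?_range_eq_some]
  simp only [decide_eq_true_eq, List.mem_range, decide_not, Bool.not_not]
  simp
  tauto

lemma used_local {n : ℕ} (f h : Fin n → Fin n) (l : List (Fin n)) : ∀ occ,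
    (parkAux n f occ l).isSome → (∀ x ∈ usedAux n f occ l, h x = f x) →
    (parkAux n h occ l).isSome ∧ usedAux n h occ l = usedAux n f occ l := by
  induction l with
  | nil => intro occ _ _; simp [parkAux, usedAux]
  | cons v rest ih =>
    intro occ hs hu
    cases hfi : (List.range n).find? (fun i => decide (f^[i] v ∉ occ)) with
    | none => 
      unfold parkAux at hs
      rw [hfi] at hs
      simp at hs
    | some i =>
      unfold parkAux at hs
      unfold usedAux at hu
      rw [hfi] at hs hu
      simp only at hs hu
      obtain ⟨hi, h1, h2⟩ := (find_iff f occ v i).1 hfi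
      have hit : ∀ j ≤ i, h^[j] v = f^[j] v := by
        intro j
        induction j with
        | zero => intro _; rfl
        | succ j ihj =>
          intro hj
          rw [Function.iterate_succ_apply', Function.iterate_succ_apply', ihj (by omega)]
          apply hu
          apply Finset.mem_union_left
          exact Finset.mem_image.2 ⟨j, Finset.mem_range.2 (by omega), rfl⟩
      have hhi : (List.range n).find? (fun i => decide (h^[i] v ∉ occ)) = some i := by
        rw [find_iff]
        refine ⟨hi, by rwa [hit i le_rfl], fun j hj => ?_⟩
        rw [hit j hj.le]
        exact h2 j hj
      obtain ⟨r1, r2⟩ := ih _ hs (fun x hx => hu x (Finset.mem_union_right _ hx))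
      constructor
      · unfold parkAux
        rw [hhi]
        simp only
        rwa [hit i le_rfl]
      · conv_lhs => unfold usedAux
        conv_rhs => unfold usedAux
        rw [hhi, hfi]
        simp only
        rw [hit i le_rfl, r2]
        congr 1
        apply Finset.image_congr
        intro j hj
        have : j < i := by simpa using hj
        exact hit j this.le

lemma used_acyclic {n : ℕ} (f : Fin n → Fin n) (l : List (Fin n)) : ∀ (occ : List (Fin n))
    (W : Finset (Fin n)), (∀ x ∈ W, x ∈ occ) → (∀ x, ∃ y, y ∉ W ∧ Rch f x y) →
    ∀ x, ∃ y, y ∉ W ∪ usedAux n f occ l ∧ Rch f x y := by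
  induction l with
  | nil => intro occ W _ h; simpa [usedAux] using h
  | cons v rest ih =>
    intro occ W hW h
    unfold usedAux
    cases hfi : (List.range n).find? (fun i => decide (f^[i] v ∉ occ)) with
    | none => simpa using h
    | some i =>
      obtain ⟨hi, h1, h2⟩ := (find_iff f occ v i).1 hfi
      simp only
      rw [← Finset.union_assoc]
      apply ih
      · intro x hx
        rw [Finset.mem_union, Finset.mem_image] at hx
        apply List.mem_cons_of_mem
        rcases hx with hx | ⟨j, hj, rfl⟩
        · exact hW x hx
        · exact h2 j (Finset.mem_range.1 hj)
      · intro x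
        obtain ⟨y, hy, hxy⟩ := h x
        by_cases hyp : y ∈ (Finset.range i).image (fun j => f^[j] v)
        · obtain ⟨j, hj, rfl⟩ := Finset.mem_image.1 hyp
          have hj := Finset.mem_range.1 hj
          refine ⟨f^[i] v, ?_, hxy.trans ⟨i - j, ?_⟩⟩
          · rw [Finset.mem_union, not_or]
            refine ⟨fun h => h1 (hW _ h), fun h => ?_⟩
            obtain ⟨j', hj', e⟩ := Finset.mem_image.1 h
            apply h1
            rw [← e]
            exact h2 j' (Finset.mem_range.1 hj')
          · rw [← Function.iterate_add_apply, Nat.sub_add_cancel hj.le]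
        · exact ⟨y, by rw [Finset.mem_union, not_or]; exact ⟨hy, hyp⟩, hxy⟩

open Classical in
lemma fixed_s {n m : ℕ} (hn : 1 ≤ n) (s : Fin m → Fin n) :
    (Finset.univ.filter (fun f : Fin n → Fin n => ParkingSucceeds f s)).card =
    n * (Finset.univ.filter (fun f : Fin n → Fin n => ParkingSucceeds f s ∧ IsTreeMap f)).card := by
  haveI : Nonempty (Fin n) := ⟨⟨0, hn⟩⟩
  set l := List.ofFn s with hl
  let Φ : (Fin n → Fin n) → Finset (Fin n) × (Fin n → Fin n) := fun f =>
    (usedAux n f [] l, fun x => if x ∈ usedAux n f [] l then f x else x)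
  have hΦ : ∀ f h, ParkingSucceeds f s →
      ((ParkingSucceeds h s ∧ Φ h = Φ f) ↔ ∀ x ∈ usedAux n f [] l, h x = f x) := by
    intro f h hf
    constructor
    · rintro ⟨-, he⟩ x hx
      have e1 : usedAux n h [] l = usedAux n f [] l := congrArg Prod.fst he
      have e2 := congrFun (congrArg Prod.snd he) x
      simp only [Φ, e1, hx, if_true] at e2
      exact e2
    · intro hx
      obtain ⟨r1, r2⟩ := used_local f h l [] hf hx
      refine ⟨r1, ?_⟩
      simp only [Φ, r2, Prod.mk.injEq, true_and]
      funext x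
      by_cases hxu : x ∈ usedAux n f [] l
      · simp [hxu, hx x hxu]
      · simp [hxu]
  set X := Finset.univ.filter (fun f : Fin n → Fin n => ParkingSucceeds f s) with hX
  set Y := Finset.univ.filter (fun f : Fin n → Fin n => ParkingSucceeds f s ∧ IsTreeMap f) with hY
  have hYX : Y ⊆ X := by
    intro f hf
    simp only [hX, hY, Finset.mem_filter, Finset.mem_univ, true_and] at hf ⊢
    exact hf.1
  rw [Finset.card_eq_sum_card_fiberwise (f := Φ) (s := X) (t := X.image Φ)
      (fun f hf => Finset.mem_coe.2 (Finset.mem_image_of_mem _ hf)),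
    Finset.card_eq_sum_card_fiberwise (f := Φ) (s := Y) (t := X.image Φ)
      (fun f hf => Finset.mem_coe.2 (Finset.mem_image_of_mem _ (hYX hf))), Finset.mul_sum]
  refine Finset.sum_congr rfl fun b hb => ?_
  obtain ⟨f, hf, rfl⟩ := Finset.mem_image.1 hb
  have hf' : ParkingSucceeds f s := by simpa [hX] using hf
  have hac : ∀ x, ∃ y, y ∉ usedAux n f [] l ∧ Rch f x y := by
    have := used_acyclic f l [] ∅ (by simp) (fun x => ⟨x, by simp, Rch.refl f x⟩)
    simpa using this
  have key := tree_count (usedAux n f [] l) f hac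
  rw [Fintype.card_fin] at key
  have eX : X.filter (fun h => Φ h = Φ f) =
      Finset.univ.filter (fun h : Fin n → Fin n => ∀ x ∈ usedAux n f [] l, h x = f x) := by
    ext h
    simp only [hX, Finset.mem_filter, Finset.mem_univ, true_and]
    exact hΦ f h hf'
  have eY : Y.filter (fun h => Φ h = Φ f) = Finset.univ.filter
      (fun h : Fin n → Fin n => (∀ x ∈ usedAux n f [] l, h x = f x) ∧ IsTreeMap h) := by
    ext h
    simp only [hY, Finset.mem_filter, Finset.mem_univ, true_and]
    rw [← hΦ f h hf']
    tauto
  rw [eX, eY]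
  convert key.symm

noncomputable def treeEquiv (n : ℕ) : LabelledRootedTree n ≃ {f : Fin n → Fin n // IsTreeMap f} where
  toFun T := ⟨T.parent, T.root, T.parent_root, T.reaches_root⟩
  invFun f := ⟨f.2.choose, f.1, f.2.choose_spec.1, f.2.choose_spec.2⟩
  left_inv T := by
    obtain ⟨ρ, f, h1, h2⟩ := T
    have hT : IsTreeMap f := ⟨ρ, h1, h2⟩
    have : hT.choose = ρ := by
      have h3 : Rch f hT.choose ρ := h2 _
      exact h3.eq_of_fixed hT.choose_spec.1
    exact (LabelledRootedTree.mk.injEq ..).mpr ⟨this, rfl⟩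
  right_inv f := rfl

open Classical in
lemma card_pairs {α β : Type*} [Fintype α] [Fintype β] (P : α → β → Prop) :
    Nat.card {p : α × β // P p.1 p.2} = ∑ b : β, (Finset.univ.filter (fun a => P a b)).card := by
  rw [Nat.card_eq_fintype_card, Fintype.card_subtype,
    Finset.card_eq_sum_card_fiberwise (f := Prod.snd) (t := Finset.univ)
      (fun _ _ => Finset.mem_coe.2 (Finset.mem_univ _))]
  refine Finset.sum_congr rfl fun b _ => ?_
  refine Finset.card_bij (fun p _ => p.1) ?_ ?_ ?_
  · rintro ⟨a, b'⟩ h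
    simp only [Finset.mem_filter, Finset.mem_univ, true_and] at h ⊢
    obtain ⟨h, rfl⟩ := h
    exact h
  · rintro ⟨a, b1⟩ h1 ⟨a', b2⟩ h2 e
    simp only [Finset.mem_filter, Finset.mem_univ, true_and] at h1 h2 e
    rw [e, h1.2, h2.2]
  · intro a ha
    exact ⟨(a, b), by simpa using ha, rfl⟩

/-- (Lackner–Panholzer, Theorem 4.4) For all `n ≥ 1` and `0 ≤ m ≤ n`,
`M_{n,m} = n · F_{n,m}`. -/
theorem lackner_panholzer_theorem_4_4 (n m : ℕ) (hn : 1 ≤ n) (hm : m ≤ n) :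
    MCount n m = n * FCount n m := by
  classical
  have hF : FCount n m = Nat.card {p : (Fin n → Fin n) × (Fin m → Fin n) //
      ParkingSucceeds p.1 p.2 ∧ IsTreeMap p.1} := by
    unfold FCount
    refine Nat.card_congr
      { toFun := fun p => ⟨((treeEquiv n p.1.1).1, p.1.2), p.2, (treeEquiv n p.1.1).2⟩
        invFun := fun p => ⟨((treeEquiv n).symm ⟨p.1.1, p.2.2⟩, p.1.2), p.2.1⟩
        left_inv := ?_
        right_inv := ?_ }
    · rintro ⟨⟨T, s⟩, h⟩
      apply Subtype.ext
      exact Prod.ext ((treeEquiv n).symm_apply_apply T) rfl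
    · rintro ⟨⟨T, s⟩, h⟩
      rfl
  rw [hF, MCount, card_pairs (fun f s => ParkingSucceeds f s),
    card_pairs (fun f s => ParkingSucceeds f s ∧ IsTreeMap f), Finset.mul_sum]
  exact Finset.sum_congr rfl fun s _ => by convert fixed_s hn s
end
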